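/- Let n ≥ 3 and p ≥ 1, l ≥ 0 be integers with p + l = n + 3. Consider generic configurations in ℙⁿ(ℂ) consisting of p points and l linear subspaces of dimension n−2. If (p,l) ∈ {(n+3,0), (n+2,1), (3,n), (2,n+1), (1,n+2)}, then generically there exists a unique rational normal curve passing through the p points and meeting each (n−2)-dimensional subspace in exactly n−1 distinct points. If p ≥ 4 and l ≥ 2, then generically no such rational normal curve exists. -/

import Mathlib

noncomputable section

/-- Projective space `ℙⁿ(ℂ)`, the projectivization of `ℂ^{n+1}`. -/
abbrev PP (k : ℕ) := Projectivization ℂ (Fin (k + 1) → ℂ)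

/-- The vector of the monomials `s^k t^(n-k)`, used to parametrize rational normal curves. -/
def veron (n : ℕ) (v : Fin 2 → ℂ) : Fin (n + 1) → ℂ :=
  fun k => v 0 ^ (k : ℕ) * v 1 ^ (n - (k : ℕ))

/-- `C ⊆ ℙⁿ` is a rational normal curve if it is the image of `[s:t] ↦ [F₀(s,t):⋯:Fₙ(s,t)]`
for a basis `F₀,…,Fₙ` of the degree-`n` binary forms; such a basis is encoded by an
invertible matrix of coefficients applied to the monomial vector `veron`. -/
def IsRNC (n : ℕ) (C : Set (PP n)) : Prop :=
  ∃ M : Matrix (Fin (n + 1)) (Fin (n + 1)) ℂ, IsUnit M.det ∧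
    C = {P : PP n | ∃ v : Fin 2 → ℂ, v ≠ 0 ∧ ∃ c : ℂ, c ≠ 0 ∧
      P.rep = c • M.mulVec (veron n v)}

/-- The linear subspace of `ℙⁿ` given as the projectivization of the column span of a matrix. -/
def projSet {n m : ℕ} (A : Matrix (Fin (n + 1)) (Fin m) ℂ) : Set (PP n) :=
  {P : PP n | P.rep ∈ Submodule.span ℂ (Set.range fun j => fun r => A r j)}

/-- A property `Q` of configurations of `p` points (rank-one `(n+1)×1` matrices) and `l`
codimension-two subspaces (rank-`(n-1)` `(n+1)×(n-1)` matrices) holds generically: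
there is a nonzero polynomial in the matrix entries such that `Q` holds at every
full-rank tuple where the polynomial does not vanish. -/
def GenHoldsPtsCodim2 (n p l : ℕ)
    (Q : (Fin p → Matrix (Fin (n + 1)) (Fin 1) ℂ) →
         (Fin l → Matrix (Fin (n + 1)) (Fin (n - 1)) ℂ) → Prop) : Prop :=
  ∃ F : MvPolynomial ((Fin p × Fin (n + 1) × Fin 1) ⊕ (Fin l × Fin (n + 1) × Fin (n - 1))) ℂ,
    F ≠ 0 ∧ ∀ P B, (∀ i, (P i).rank = 1) → (∀ j, (B j).rank = n - 1) →
      MvPolynomial.eval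
        (Sum.elim (fun q => P q.1 q.2.1 q.2.2) (fun q => B q.1 q.2.1 q.2.2)) F ≠ 0 →
      Q P B

section Part1
open Polynomial

def cone {n : ℕ} (M : Matrix (Fin (n + 1)) (Fin (n + 1)) ℂ) : Set (Fin (n + 1) → ℂ) :=
  {z | ∃ v : Fin 2 → ℂ, v ≠ 0 ∧ ∃ c : ℂ, c ≠ 0 ∧ z = c • M.mulVec (veron n v)}

lemma veron_aff (n : ℕ) (x : ℂ) (k : Fin (n + 1)) : veron n ![x, 1] k = x ^ (k : ℕ) := by
  simp [veron]

lemma veron_inf (n : ℕ) : veron n ![1, 0] = Pi.single (Fin.last n) 1 := by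
  ext k
  by_cases h : k = Fin.last n
  · subst h; simp [veron]
  · have : n - (k : ℕ) ≠ 0 := by
      have := k.2
      have h2 : (k : ℕ) ≠ n := fun h3 => h (Fin.ext h3)
      omega
    simp [veron, h, this]

lemma veron_smul (n : ℕ) (c : ℂ) (v : Fin 2 → ℂ) : veron n (c • v) = c ^ n • veron n v := by
  ext k
  have : n = (k : ℕ) + (n - k) := by have := k.2; omega
  simp only [veron, Pi.smul_apply, smul_eq_mul, mul_pow]
  conv_rhs => rw [show c ^ n = c ^ (k : ℕ) * c ^ (n - (k : ℕ)) by rw [← pow_add, ← this]]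
  ring

lemma aff_or_inf (v : Fin 2 → ℂ) (hv : v ≠ 0) :
    (∃ c : ℂ, c ≠ 0 ∧ ∃ x : ℂ, v = c • ![x, 1]) ∨ (∃ c : ℂ, c ≠ 0 ∧ v = c • ![1, 0]) := by
  by_cases h : v 1 = 0
  · right
    refine ⟨v 0, ?_, ?_⟩
    · intro h0; apply hv; ext i; fin_cases i <;> simp [h, h0]
    · ext i; fin_cases i <;> simp [h]
  · left
    refine ⟨v 1, h, v 0 / v 1, ?_⟩
    ext i; fin_cases i
    · simp; field_simp
    · simp

lemma cone_iff {n : ℕ} (M : Matrix (Fin (n + 1)) (Fin (n + 1)) ℂ) (z : Fin (n + 1) → ℂ) :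
    z ∈ cone M ↔ (∃ c : ℂ, c ≠ 0 ∧ ∃ x : ℂ, z = c • M.mulVec (veron n ![x, 1])) ∨
      (∃ c : ℂ, c ≠ 0 ∧ z = c • M.mulVec (veron n ![1, 0])) := by
  constructor
  · rintro ⟨v, hv, c, hc, rfl⟩
    rcases aff_or_inf v hv with ⟨d, hd, x, rfl⟩ | ⟨d, hd, rfl⟩
    · left
      refine ⟨c * d ^ n, mul_ne_zero hc (pow_ne_zero _ hd), x, ?_⟩
      rw [veron_smul, Matrix.mulVec_smul, smul_smul]
    · right
      refine ⟨c * d ^ n, mul_ne_zero hc (pow_ne_zero _ hd), ?_⟩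
      rw [veron_smul, Matrix.mulVec_smul, smul_smul]
  · rintro (⟨c, hc, x, rfl⟩ | ⟨c, hc, rfl⟩)
    · exact ⟨![x, 1], fun h => by simpa using congrFun h 1, c, hc, rfl⟩
    · exact ⟨![1, 0], fun h => by simpa using congrFun h 0, c, hc, rfl⟩

lemma cone_smul {n : ℕ} {M : Matrix (Fin (n + 1)) (Fin (n + 1)) ℂ} {z : Fin (n + 1) → ℂ}
    (hz : z ∈ cone M) {c : ℂ} (hc : c ≠ 0) : c • z ∈ cone M := by
  obtain ⟨v, hv, d, hd, rfl⟩ := hz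
  exact ⟨v, hv, c * d, mul_ne_zero hc hd, by rw [smul_smul]⟩

lemma cone_smul_iff {n : ℕ} {M : Matrix (Fin (n + 1)) (Fin (n + 1)) ℂ} {z : Fin (n + 1) → ℂ}
    {c : ℂ} (hc : c ≠ 0) : c • z ∈ cone M ↔ z ∈ cone M := by
  refine ⟨fun h => ?_, fun h => cone_smul h hc⟩
  have := cone_smul h (inv_ne_zero hc)
  rwa [smul_smul, inv_mul_cancel₀ hc, one_smul] at this

lemma rep_mk {n : ℕ} (z : Fin (n + 1) → ℂ) (hz : z ≠ 0) :
    ∃ c : ℂ, c ≠ 0 ∧ (Projectivization.mk ℂ z hz).rep = c • z := by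
  obtain ⟨a, ha⟩ := Projectivization.exists_smul_eq_mk_rep ℂ z hz
  exact ⟨a, a.ne_zero, ha.symm⟩

/-- functional given by a polynomial -/
def dual {n : ℕ} (f : ℂ[X]) (z : Fin (n + 1) → ℂ) : ℂ := ∑ k : Fin (n + 1), f.coeff k * z k

lemma dual_veron {n : ℕ} (f : ℂ[X]) (hf : f.natDegree ≤ n) (x : ℂ) :
    dual f (veron n ![x, 1]) = f.eval x := by
  rw [dual, eval_eq_sum_range' (Nat.lt_succ_of_le hf), Finset.sum_range]
  simp [veron_aff]

lemma dual_inf {n : ℕ} (f : ℂ[X]) : dual f (Pi.single (Fin.last n) 1) = f.coeff n := by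
  simp [dual, Pi.single_apply]

lemma dual_add {n : ℕ} (f : ℂ[X]) (z w : Fin (n + 1) → ℂ) :
    dual f (z + w) = dual f z + dual f w := by
  simp [dual, mul_add, Finset.sum_add_distrib]

lemma dual_smul {n : ℕ} (f : ℂ[X]) (c : ℂ) (z : Fin (n + 1) → ℂ) :
    dual f (c • z) = c * dual f z := by
  simp only [dual, Pi.smul_apply, smul_eq_mul, Finset.mul_sum]
  exact Finset.sum_congr rfl fun _ _ => by ring

lemma dual_sum {n : ℕ} {ι : Type*} (s : Finset ι) (f : ℂ[X]) (z : ι → Fin (n + 1) → ℂ) :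
    dual f (∑ i ∈ s, z i) = ∑ i ∈ s, dual f (z i) := by
  classical
  induction s using Finset.induction_on with
  | empty => simp [dual]
  | insert a s ha ih => rw [Finset.sum_insert ha, Finset.sum_insert ha, dual_add, ih]

lemma veron_indep {n : ℕ} {ι : Type*} [Fintype ι] (hι : Fintype.card ι ≤ n + 1) (x : ι → ℂ)
    (hx : Function.Injective x) : LinearIndependent ℂ (fun i => veron n ![x i, 1]) := by
  classical
  rw [Fintype.linearIndependent_iff]
  intro g hg i
  have hdeg : (∏ k ∈ Finset.univ.erase i, (X - C (x k))).natDegree ≤ n := by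
    rw [natDegree_prod_of_monic _ _ fun k _ => monic_X_sub_C _]
    simp [Finset.card_erase_of_mem]; omega
  have h := congrArg (dual (∏ k ∈ Finset.univ.erase i, (X - C (x k)))) hg
  rw [dual_sum] at h
  simp only [dual_smul, dual_veron _ hdeg] at h
  rw [Finset.sum_eq_single i] at h
  · have h0 : dual (∏ k ∈ Finset.univ.erase i, (X - C (x k))) (0 : Fin (n + 1) → ℂ) = 0 := by
      simp [dual]
    rw [h0, eval_prod] at h
    rcases mul_eq_zero.1 h with h | h
    · exact h
    · exfalso
      rw [Finset.prod_eq_zero_iff] at h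
      obtain ⟨k, hk, h⟩ := h
      simp at h hk
      exact hk (hx (by linear_combination -h))
  · intro b _ hb
    rw [eval_prod, Finset.prod_eq_zero (i := b) (by simp [hb]) (by simp), mul_zero]
  · simp

/-- if a matrix kills infinitely many points of the standard curve it is zero -/
lemma mat_eq_of_veron {n : ℕ} {m : Type*} (A B : Matrix m (Fin (n + 1)) ℂ)
    (s : Set ℂ) (hs : s.Infinite)
    (h : ∀ x ∈ s, A.mulVec (veron n ![x, 1]) = B.mulVec (veron n ![x, 1])) : A = B := by
  ext i j
  have key : (∑ k : Fin (n + 1), C (A i k) * X ^ (k : ℕ) : ℂ[X])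
      = ∑ k : Fin (n + 1), C (B i k) * X ^ (k : ℕ) := by
    apply Polynomial.eq_of_infinite_eval_eq
    refine hs.mono fun x hx => ?_
    have := congrFun (h x hx) i
    simpa [Matrix.mulVec, dotProduct, veron_aff, eval_finsetSum] using this
  have := congrArg (fun p => p.coeff j) key
  simpa [finsetSum_coeff, coeff_C_mul, coeff_X_pow, Fin.val_inj] using this

def substMat (n : ℕ) (g : Matrix (Fin 2) (Fin 2) ℂ) : Matrix (Fin (n + 1)) (Fin (n + 1)) ℂ :=
  fun k j => ((C (g 0 0) * X + C (g 0 1)) ^ (k : ℕ) *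
    (C (g 1 0) * X + C (g 1 1)) ^ (n - (k : ℕ)) : ℂ[X]).coeff j

lemma substMat_veron (n : ℕ) (g : Matrix (Fin 2) (Fin 2) ℂ) (v : Fin 2 → ℂ) (hv : v ≠ 0) :
    (substMat n g).mulVec (veron n v) = veron n (g.mulVec v) := by
  have hd : ∀ a b : ℂ, (C a * X + C b : ℂ[X]).natDegree ≤ 1 := fun a b => by compute_degree
  have hdeg : ∀ k : Fin (n + 1), ((C (g 0 0) * X + C (g 0 1)) ^ (k : ℕ) *
    (C (g 1 0) * X + C (g 1 1)) ^ (n - (k : ℕ)) : ℂ[X]).natDegree ≤ n := by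
    intro k
    refine natDegree_mul_le.trans ?_
    have h1 := natDegree_pow_le_of_le (k : ℕ) (hd (g 0 0) (g 0 1))
    have h2 := natDegree_pow_le_of_le (n - k : ℕ) (hd (g 1 0) (g 1 1))
    have := k.2
    omega
  rcases aff_or_inf v hv with ⟨c, hc, x, rfl⟩ | ⟨c, hc, rfl⟩
  · rw [Matrix.mulVec_smul, veron_smul, veron_smul, Matrix.mulVec_smul]
    congr 1
    ext k
    have := dual_veron _ (hdeg k) x
    rw [dual] at this
    rw [Matrix.mulVec, dotProduct]
    simp only [substMat]
    rw [this]
    simp [veron, Matrix.mulVec, dotProduct, Fin.sum_univ_two]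
  · rw [Matrix.mulVec_smul, veron_smul, veron_smul, Matrix.mulVec_smul]
    congr 1
    ext k
    rw [veron_inf]
    have e1 : ∀ a b : ℂ, ∀ j : ℕ, ((C a * X + C b : ℂ[X]) ^ j).coeff j = a ^ j := by
      intro a b j
      have := coeff_pow_of_natDegree_le (m := j) (hd a b)
      rw [mul_one] at this
      rw [this]; simp
    have h1 := natDegree_pow_le_of_le (k : ℕ) (hd (g 0 0) (g 0 1))
    have h2 := natDegree_pow_le_of_le (n - k : ℕ) (hd (g 1 0) (g 1 1))
    rw [mul_one] at h1 h2
    have h3 := coeff_mul_add_eq_of_natDegree_le h1 h2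
    have hk : (k : ℕ) + (n - k) = n := by have := k.2; omega
    rw [hk, e1, e1] at h3
    simp only [Matrix.mulVec_single_one, Matrix.col_apply, substMat, Fin.val_last, h3]
    simp [veron, Matrix.mulVec, dotProduct, Fin.sum_univ_two]

lemma substMat_isUnit (n : ℕ) (g : Matrix (Fin 2) (Fin 2) ℂ) (hg : g.det ≠ 0) :
    IsUnit (substMat n g).det := by
  have hu : IsUnit g.det := hg.isUnit
  have : substMat n g * substMat n g⁻¹ = 1 := by
    refine mat_eq_of_veron _ _ Set.univ Set.infinite_univ fun x _ => ?_
    have hx : (![x, 1] : Fin 2 → ℂ) ≠ 0 := fun h => by simpa using congrFun h 1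
    have hx2 : g⁻¹.mulVec ![x, 1] ≠ 0 := by
      intro h
      apply hx
      have h2 := congrArg g.mulVec h
      rwa [Matrix.mulVec_mulVec, Matrix.mul_nonsing_inv _ hu, Matrix.one_mulVec,
        Matrix.mulVec_zero] at h2
    rw [← Matrix.mulVec_mulVec, substMat_veron _ _ _ hx, substMat_veron _ _ _ hx2,
      Matrix.mulVec_mulVec, Matrix.mul_nonsing_inv _ hu]
    simp
  have h2 := congrArg Matrix.det this
  rw [Matrix.det_mul, Matrix.det_one] at h2
  exact IsUnit.of_mul_eq_one _ h2

lemma cone_subst {n : ℕ} (M : Matrix (Fin (n + 1)) (Fin (n + 1)) ℂ)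
    (g : Matrix (Fin 2) (Fin 2) ℂ) (hg : g.det ≠ 0) : cone (M * substMat n g) = cone M := by
  have hu : IsUnit g.det := hg.isUnit
  ext z
  constructor
  · rintro ⟨v, hv, c, hc, rfl⟩
    refine ⟨g.mulVec v, ?_, c, hc, ?_⟩
    · intro h
      apply hv
      have h2 := congrArg g⁻¹.mulVec h
      rwa [Matrix.mulVec_mulVec, Matrix.nonsing_inv_mul _ hu, Matrix.one_mulVec,
        Matrix.mulVec_zero] at h2
    · rw [← Matrix.mulVec_mulVec, substMat_veron _ _ _ hv]
  · rintro ⟨v, hv, c, hc, rfl⟩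
    have h0 : g⁻¹.mulVec v ≠ 0 := by
      intro h
      apply hv
      have h2 := congrArg g.mulVec h
      rwa [Matrix.mulVec_mulVec, Matrix.mul_nonsing_inv _ hu, Matrix.one_mulVec,
        Matrix.mulVec_zero] at h2
    refine ⟨g⁻¹.mulVec v, h0, c, hc, ?_⟩
    rw [← Matrix.mulVec_mulVec, substMat_veron _ _ _ h0, Matrix.mulVec_mulVec,
      Matrix.mul_nonsing_inv _ hu, Matrix.one_mulVec]

/-- move a point of the curve to infinity -/
lemma exists_inf {n : ℕ} (M : Matrix (Fin (n + 1)) (Fin (n + 1)) ℂ) (hM : IsUnit M.det)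
    (u : Fin (n + 1) → ℂ) (hu : u ∈ cone M) :
    ∃ M' : Matrix (Fin (n + 1)) (Fin (n + 1)) ℂ, IsUnit M'.det ∧ cone M' = cone M ∧
      ∃ c : ℂ, c ≠ 0 ∧ u = c • M'.mulVec (veron n ![1, 0]) := by
  obtain ⟨v, hv, c, hc, rfl⟩ := hu
  obtain ⟨g, hg, hgv⟩ : ∃ g : Matrix (Fin 2) (Fin 2) ℂ, g.det ≠ 0 ∧ g.mulVec ![1, 0] = v := by
    by_cases h : v 0 = 0
    · have h1 : v 1 ≠ 0 := by
        intro h1; apply hv; ext i; fin_cases i <;> simp [h, h1]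
      refine ⟨!![0, 1; v 1, 0], by simp [Matrix.det_fin_two, h1], ?_⟩
      ext i; fin_cases i <;> simp [h]
    · refine ⟨!![v 0, 0; v 1, 1], by simp [Matrix.det_fin_two, h], ?_⟩
      ext i; fin_cases i <;> simp
  refine ⟨M * substMat n g, ?_, cone_subst M g hg, c, hc, ?_⟩
  · rw [Matrix.det_mul]; exact hM.mul (substMat_isUnit n g hg)
  · rw [← Matrix.mulVec_mulVec, substMat_veron _ _ _ (fun h => by simpa using congrFun h 0), hgv]

lemma exists_affine {n : ℕ} (M : Matrix (Fin (n + 1)) (Fin (n + 1)) ℂ) (hM : IsUnit M.det)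
    (a b : ℂ) (ha : a ≠ 0) :
    ∃ M' : Matrix (Fin (n + 1)) (Fin (n + 1)) ℂ, IsUnit M'.det ∧ cone M' = cone M ∧
      ∀ x : ℂ, M'.mulVec (veron n ![x, 1]) = M.mulVec (veron n ![a * x + b, 1]) := by
  have hg : (!![a, b; 0, 1] : Matrix (Fin 2) (Fin 2) ℂ).det ≠ 0 := by simp [Matrix.det_fin_two, ha]
  refine ⟨M * substMat n !![a, b; 0, 1], ?_, cone_subst M _ hg, ?_⟩
  · rw [Matrix.det_mul]; exact hM.mul (substMat_isUnit n _ hg)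
  · intro x
    rw [← Matrix.mulVec_mulVec, substMat_veron _ _ _ (fun h => by simpa using congrFun h 1)]
    congr 2
    ext i; fin_cases i <;> simp [mul_comm]

lemma point_subset {n : ℕ} (M : Matrix (Fin (n + 1)) (Fin (n + 1)) ℂ)
    (P : Matrix (Fin (n + 1)) (Fin 1) ℂ) (u : Fin (n + 1) → ℂ) (hu : u = fun r => P r 0)
    (hu0 : u ≠ 0) : projSet P ⊆ {Q : PP n | Q.rep ∈ cone M} ↔ u ∈ cone M := by
  have hr : (Set.range fun j : Fin 1 => fun r => P r j) = {u} := by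
    rw [hu]; exact Set.range_unique
  constructor
  · intro h
    obtain ⟨c, hc, hrep⟩ := rep_mk u hu0
    have h1 : Projectivization.mk ℂ u hu0 ∈ projSet P := by
      simp only [projSet, Set.mem_ofPred_eq, hr, hrep]
      exact Submodule.smul_mem _ _ (Submodule.mem_span_singleton_self u)
    have h2 := h h1
    simp only [Set.mem_ofPred_eq, hrep] at h2
    exact (cone_smul_iff hc).1 h2
  · intro h Q hQ
    simp only [projSet, Set.mem_ofPred_eq, hr] at hQ
    obtain ⟨c, hc⟩ := Submodule.mem_span_singleton.1 hQ
    have hc0 : c ≠ 0 := by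
      rintro rfl
      exact Q.rep_nonzero (by rw [← hc, zero_smul])
    simp only [Set.mem_ofPred_eq, ← hc]
    exact cone_smul h hc0

end Part1

section Part2
open Polynomial

def Jmat (n : ℕ) : Matrix (Fin (n + 1)) (Fin (n + 1)) ℂ :=
  fun i j => if (j : ℕ) = i + 1 then 1 else 0

lemma Jmat_mulVec_lt {n : ℕ} (y : Fin (n + 1) → ℂ) (i : Fin (n + 1)) (hi : (i : ℕ) + 1 < n + 1) :
    (Jmat n).mulVec y i = y ⟨i + 1, hi⟩ := by
  rw [Matrix.mulVec, dotProduct, Finset.sum_eq_single ⟨(i : ℕ) + 1, hi⟩]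
  · simp [Jmat]
  · intro b _ hb
    have : (b : ℕ) ≠ i + 1 := fun h => hb (Fin.ext h)
    simp [Jmat, this]
  · simp

lemma Jmat_mulVec_last {n : ℕ} (y : Fin (n + 1) → ℂ) :
    (Jmat n).mulVec y (Fin.last n) = 0 := by
  rw [Matrix.mulVec, dotProduct]
  refine Finset.sum_eq_zero fun b _ => ?_
  have : (b : ℕ) ≠ n + 1 := by have := b.2; omega
  simp [Jmat, this]

lemma Jmat_veron {n : ℕ} (x : ℂ) : (Jmat n).mulVec (veron n ![x, 1]) =
    x • veron n ![x, 1] + (- x ^ (n + 1)) • Pi.single (Fin.last n) 1 := by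
  ext i
  by_cases hi : i = Fin.last n
  · subst hi
    rw [Jmat_mulVec_last]
    simp [veron_aff]; ring
  · have hi' : (i : ℕ) + 1 < n + 1 := by
      have := i.2
      have h2 : (i : ℕ) ≠ n := fun h3 => hi (Fin.ext h3)
      omega
    rw [Jmat_mulVec_lt _ _ hi']
    simp [veron_aff, hi]; ring

lemma theta_of_curve {n : ℕ} (M : Matrix (Fin (n + 1)) (Fin (n + 1)) ℂ) (hM : IsUnit M.det)
    (u : Fin (n + 1) → ℂ) (c : ℂ) (hc : c ≠ 0) (hu : u = c • M.mulVec (veron n ![1, 0])) :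
    ∃ θ : Matrix (Fin (n + 1)) (Fin (n + 1)) ℂ, ∀ x : ℂ, ∃ h : ℂ,
      θ.mulVec (M.mulVec (veron n ![x, 1])) = x • M.mulVec (veron n ![x, 1]) + h • u := by
  refine ⟨M * Jmat n * M⁻¹, fun x => ⟨- x ^ (n + 1) * c⁻¹, ?_⟩⟩
  rw [Matrix.mulVec_mulVec, Matrix.mul_assoc, Matrix.nonsing_inv_mul _ hM, Matrix.mul_one,
    ← Matrix.mulVec_mulVec, Jmat_veron, hu, veron_inf, Matrix.mulVec_add, Matrix.mulVec_smul,
    Matrix.mulVec_smul, smul_smul]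
  congr 2
  field_simp

abbrev sp {n k : ℕ} (B : Matrix (Fin (n + 1)) (Fin k) ℂ) : Submodule ℂ (Fin (n + 1) → ℂ) :=
  Submodule.span ℂ (Set.range fun j => fun r => B r j)

lemma finrank_sp {n k : ℕ} (B : Matrix (Fin (n + 1)) (Fin k) ℂ) (hB : B.rank = k) :
    Module.finrank ℂ (sp B) = k := by
  have h := Matrix.rank_eq_finrank_span_cols B
  rw [hB] at h
  exact h.symm

lemma sec {n k : ℕ} (hk : k ≤ n + 1) (hk1 : k ≠ 0)
    (M : Matrix (Fin (n + 1)) (Fin (n + 1)) ℂ) (hM : IsUnit M.det)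
    (u : Fin (n + 1) → ℂ) (c : ℂ) (hc : c ≠ 0) (hu : u = c • M.mulVec (veron n ![1, 0]))
    (θ : Matrix (Fin (n + 1)) (Fin (n + 1)) ℂ)
    (hθ : ∀ x : ℂ, ∃ h : ℂ,
      θ.mulVec (M.mulVec (veron n ![x, 1])) = x • M.mulVec (veron n ![x, 1]) + h • u)
    (B : Matrix (Fin (n + 1)) (Fin k) ℂ) (hB : B.rank = k) (huB : u ∉ sp B)
    (hC : ({Q : PP n | Q.rep ∈ cone M} ∩ projSet B).ncard = k) :
    ∀ b ∈ sp B, ∃ w ∈ sp B, ∃ h : ℂ, θ.mulVec b = w + h • u := by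
  classical
  set S := ({Q : PP n | Q.rep ∈ cone M} ∩ projSet B) with hS
  have hfin : S.Finite := Set.finite_of_ncard_ne_zero (by rw [hC]; exact hk1)
  have hex : ∀ Q : S, ∃ x : ℂ, ∃ c : ℂ, c ≠ 0 ∧
      (Q : PP n).rep = c • M.mulVec (veron n ![x, 1]) := by
    rintro ⟨Q, hQ1, hQ2⟩
    rcases (cone_iff M _).1 hQ1 with ⟨d, hd, x, hx⟩ | ⟨d, hd, hx⟩
    · exact ⟨x, d, hd, hx⟩
    · exfalso
      apply huB
      have : u = (c * d⁻¹) • Q.rep := by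
        rw [hx, hu, smul_smul, mul_assoc, inv_mul_cancel₀ hd, mul_one]
      rw [this]
      exact Submodule.smul_mem _ _ hQ2
  choose x d hd hx using hex
  have hinj : Function.Injective x := by
    intro Q Q' h
    apply Subtype.ext
    rw [← Projectivization.mk_rep (Q : PP n), ← Projectivization.mk_rep (Q' : PP n),
      Projectivization.mk_eq_mk_iff']
    refine ⟨d Q * (d Q')⁻¹, ?_⟩
    rw [hx Q, hx Q', h, smul_smul, mul_assoc, inv_mul_cancel₀ (hd Q'), mul_one]
  haveI : Fintype S := hfin.fintype
  have hcard : Fintype.card S = k := by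
    rw [← hC, ← Nat.card_coe_set_eq, Nat.card_eq_fintype_card]
  have hli := veron_indep (n := n) (by rw [hcard]; exact hk) x hinj
  have hMinj : Function.Injective M.mulVecLin := by
    intro a b hab
    have := congrArg (M⁻¹).mulVec hab
    simpa [Matrix.mulVec_mulVec, Matrix.nonsing_inv_mul _ hM] using this
  have hli2 : LinearIndependent ℂ (fun Q => M.mulVec (veron n ![x Q, 1])) :=
    hli.map' M.mulVecLin (LinearMap.ker_eq_bot.2 hMinj)
  have hle : Submodule.span ℂ (Set.range fun Q => M.mulVec (veron n ![x Q, 1])) ≤ sp B := by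
    rw [Submodule.span_le]
    rintro _ ⟨Q, rfl⟩
    have h1 := Q.2.2
    have : M.mulVec (veron n ![x Q, 1]) = (d Q)⁻¹ • (Q : PP n).rep := by
      rw [hx Q, smul_smul, inv_mul_cancel₀ (hd Q), one_smul]
    simp only [this]
    exact Submodule.smul_mem _ _ h1
  have heq : Submodule.span ℂ (Set.range fun Q => M.mulVec (veron n ![x Q, 1])) = sp B := by
    apply Submodule.eq_of_le_of_finrank_eq hle
    rw [finrank_sp B hB, finrank_span_eq_card hli2, hcard]
  intro b hb
  rw [← heq] at hb
  induction hb using Submodule.span_induction with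
  | mem z hz =>
    obtain ⟨Q, rfl⟩ := hz
    obtain ⟨h, hh⟩ := hθ (x Q)
    refine ⟨_, ?_, h, hh⟩
    exact Submodule.smul_mem _ _ (hle (Submodule.subset_span ⟨Q, rfl⟩))
  | zero => exact ⟨0, Submodule.zero_mem _, 0, by simp⟩
  | add y z _ _ hy hz =>
    obtain ⟨w, hw, h, e⟩ := hy
    obtain ⟨w', hw', h', e'⟩ := hz
    refine ⟨w + w', Submodule.add_mem _ hw hw', h + h', ?_⟩
    rw [Matrix.mulVec_add, e, e', add_smul]; abel
  | smul a y _ hy =>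
    obtain ⟨w, hw, h, e⟩ := hy
    refine ⟨a • w, Submodule.smul_mem _ _ hw, a * h, ?_⟩
    rw [Matrix.mulVec_smul, e, smul_add, smul_smul]

/-! Curve from theta -/

def Phi {n : ℕ} (θ : Matrix (Fin (n + 1)) (Fin (n + 1)) ℂ) (u : Fin (n + 1) → ℂ) :
    Fin (n + 1) → ℂ[X] := (Matrix.charmatrix θ).adjugate.mulVec (fun r => C (u r))

def Nmat {n : ℕ} (θ : Matrix (Fin (n + 1)) (Fin (n + 1)) ℂ) (u : Fin (n + 1) → ℂ) :
    Matrix (Fin (n + 1)) (Fin (n + 1)) ℂ := fun r k => (Phi θ u r).coeff k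

lemma Phi_rel {n : ℕ} (θ : Matrix (Fin (n + 1)) (Fin (n + 1)) ℂ) (u : Fin (n + 1) → ℂ)
    (r : Fin (n + 1)) :
    X * Phi θ u r - ∑ s, C (θ r s) * Phi θ u s = θ.charpoly * C (u r) := by
  have h : (Matrix.charmatrix θ).mulVec (Phi θ u) = θ.charpoly • (fun r => C (u r)) := by
    rw [Phi, Matrix.mulVec_mulVec, Matrix.mul_adjugate, Matrix.smul_mulVec, Matrix.one_mulVec]
    rfl
  have h2 := congrFun h r
  rw [Pi.smul_apply, smul_eq_mul] at h2
  rw [← h2]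
  simp only [Matrix.mulVec, dotProduct, Matrix.charmatrix_apply, sub_mul, Finset.sum_sub_distrib]
  simp [Matrix.diagonal_apply]

def cv {n : ℕ} (θ : Matrix (Fin (n + 1)) (Fin (n + 1)) ℂ) (u : Fin (n + 1) → ℂ) (j : ℕ) :
    Fin (n + 1) → ℂ := fun r => (Phi θ u r).coeff j

lemma cv_succ {n : ℕ} (θ : Matrix (Fin (n + 1)) (Fin (n + 1)) ℂ) (u : Fin (n + 1) → ℂ) (j : ℕ) :
    cv θ u j = θ.mulVec (cv θ u (j + 1)) + θ.charpoly.coeff (j + 1) • u := by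
  ext r
  have := congrArg (fun p => p.coeff (j + 1)) (Phi_rel θ u r)
  simp [finsetSum_coeff] at this
  simp [cv, Matrix.mulVec, dotProduct]
  linear_combination this

lemma cv_zero {n : ℕ} (θ : Matrix (Fin (n + 1)) (Fin (n + 1)) ℂ) (u : Fin (n + 1) → ℂ) :
    0 = θ.mulVec (cv θ u 0) + θ.charpoly.coeff 0 • u := by
  ext r
  have := congrArg (fun p => p.coeff 0) (Phi_rel θ u r)
  simp [finsetSum_coeff] at this
  simp [cv, Matrix.mulVec, dotProduct]
  linear_combination this

lemma cv_big {n : ℕ} (θ : Matrix (Fin (n + 1)) (Fin (n + 1)) ℂ) (u : Fin (n + 1) → ℂ) (j : ℕ)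
    (hj : n < j) : cv θ u j = 0 := by
  have hb : ∃ N, ∀ i, N ≤ i → cv θ u i = 0 := by
    refine ⟨∑ r, (Phi θ u r).natDegree + 1, fun i hi => ?_⟩
    ext r
    refine coeff_eq_zero_of_natDegree_lt ?_
    have := Finset.single_le_sum (f := fun r => (Phi θ u r).natDegree)
      (fun _ _ => Nat.zero_le _) (Finset.mem_univ r)
    omega
  obtain ⟨N, hN⟩ := hb
  have : ∀ d, ∀ i, n < i → N ≤ i + d → cv θ u i = 0 := by
    intro d
    induction d with
    | zero => intro i _ h; exact hN i h
    | succ d ih =>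
      intro i hi h
      rw [cv_succ, ih (i + 1) (by omega) (by omega),
        coeff_eq_zero_of_natDegree_lt (p := θ.charpoly)]
      · simp
      · rw [Matrix.charpoly_natDegree_eq_dim]; simp; omega
  exact this N j hj (by omega)

lemma cv_top {n : ℕ} (θ : Matrix (Fin (n + 1)) (Fin (n + 1)) ℂ) (u : Fin (n + 1) → ℂ) :
    cv θ u n = u := by
  rw [cv_succ, cv_big _ _ _ (Nat.lt_succ_self n)]
  have := Matrix.charpoly_monic θ
  rw [Monic, leadingCoeff, Matrix.charpoly_natDegree_eq_dim, Fintype.card_fin] at this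
  rw [this]; simp

lemma Phi_natDegree {n : ℕ} (θ : Matrix (Fin (n + 1)) (Fin (n + 1)) ℂ) (u : Fin (n + 1) → ℂ)
    (r : Fin (n + 1)) : (Phi θ u r).natDegree ≤ n := by
  rw [natDegree_le_iff_coeff_eq_zero]
  intro j hj
  exact congrFun (cv_big θ u j hj) r

lemma Nmat_veron {n : ℕ} (θ : Matrix (Fin (n + 1)) (Fin (n + 1)) ℂ) (u : Fin (n + 1) → ℂ)
    (x : ℂ) : (Nmat θ u).mulVec (veron n ![x, 1]) = fun r => (Phi θ u r).eval x := by
  ext r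
  rw [← dual_veron _ (Phi_natDegree θ u r)]
  rfl

lemma Nmat_inf {n : ℕ} (θ : Matrix (Fin (n + 1)) (Fin (n + 1)) ℂ) (u : Fin (n + 1) → ℂ) :
    (Nmat θ u).mulVec (veron n ![1, 0]) = u := by
  rw [veron_inf]
  conv_rhs => rw [← cv_top θ u]
  ext r
  simp [Nmat, cv]

lemma eval_Phi {n : ℕ} (θ : Matrix (Fin (n + 1)) (Fin (n + 1)) ℂ) (u : Fin (n + 1) → ℂ)
    (x : ℂ) : (fun r => (Phi θ u r).eval x) = (Matrix.scalar _ x - θ).adjugate.mulVec u := by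
  have h : (Matrix.charmatrix θ).map (evalRingHom x) = Matrix.scalar _ x - θ := by
    ext i j
    by_cases hij : i = j
    · subst hij; simp [Matrix.charmatrix_apply]
    · simp [Matrix.charmatrix_apply, hij]
  ext r
  rw [← h, ← RingHom.mapMatrix_apply, ← RingHom.map_adjugate, RingHom.mapMatrix_apply]
  simp [Phi, Matrix.mulVec, dotProduct, eval_finsetSum]

/-- A matrix having the standard curve as eigenvectors is scalar. -/
lemma scalar_of_eig {n : ℕ} (A : Matrix (Fin (n + 1)) (Fin (n + 1)) ℂ) (s : Set ℂ)
    (hs : s.Infinite)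
    (h : ∀ x ∈ s, ∃ c : ℂ, A.mulVec (veron n ![x, 1]) = c • veron n ![x, 1]) :
    ∃ c : ℂ, A = c • 1 := by
  set a : Fin (n + 1) → ℂ[X] := fun k => ∑ j : Fin (n + 1), C (A k j) * X ^ (j : ℕ) with ha
  have hev : ∀ k x, (a k).eval x = A.mulVec (veron n ![x, 1]) k := by
    intro k x
    simp [ha, Matrix.mulVec, dotProduct, veron_aff, eval_finsetSum]
  have h1 : ∀ k, a k = X ^ (k : ℕ) * a 0 := by
    intro k
    apply Polynomial.eq_of_infinite_eval_eq
    refine hs.mono fun x hx => ?_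
    obtain ⟨c, hc⟩ := h x hx
    simp [hev, hc, veron_aff]; ring
  have hco : ∀ k j, n < j → (a k).coeff j = 0 := by
    intro k j hj
    simp only [ha, finsetSum_coeff, coeff_C_mul, coeff_X_pow]
    refine Finset.sum_eq_zero fun i _ => ?_
    have : j ≠ i := by have := i.2; omega
    simp [this]
  have h0 : a 0 = C ((a 0).coeff 0) := by
    ext j
    rcases j with _ | j
    · simp
    · have := hco (Fin.last n) (n + (j + 1)) (by omega)
      rw [h1, Fin.val_last, coeff_X_pow_mul', if_pos (by omega)] at this
      simp only [add_tsub_cancel_left] at this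
      rw [this, coeff_C_succ]
  refine ⟨(a 0).coeff 0, ?_⟩
  refine mat_eq_of_veron _ _ Set.univ Set.infinite_univ fun x _ => ?_
  ext k
  rw [← hev, h1, h0]
  simp [veron_aff, Matrix.smul_mulVec]

lemma Nmat_unique {n : ℕ} (M θ : Matrix (Fin (n + 1)) (Fin (n + 1)) ℂ) (hM : IsUnit M.det)
    (u : Fin (n + 1) → ℂ) (hu : u ≠ 0)
    (hθ : ∀ x : ℂ, ∃ h : ℂ,
      θ.mulVec (M.mulVec (veron n ![x, 1])) = x • M.mulVec (veron n ![x, 1]) + h • u) :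
    ∃ c : ℂ, c ≠ 0 ∧ Nmat θ u = c • M := by
  have hinf : {x : ℂ | ¬ θ.charpoly.IsRoot x}.Infinite := by
    have := Polynomial.finite_setOfPred_isRoot (Matrix.charpoly_monic θ).ne_zero
    exact this.infinite_compl
  obtain ⟨c, hc⟩ := scalar_of_eig (M⁻¹ * Nmat θ u) _ hinf (by
    intro x hx
    obtain ⟨h, hh⟩ := hθ x
    set ψ := M.mulVec (veron n ![x, 1]) with hψ
    have hψ0 : ψ ≠ 0 := by
      intro h0
      have := congrArg (M⁻¹).mulVec h0
      rw [hψ, Matrix.mulVec_mulVec, Matrix.nonsing_inv_mul _ hM, Matrix.one_mulVec,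
        Matrix.mulVec_zero] at this
      have h1 := congrFun this 0
      rw [veron_aff] at h1
      simp at h1
    have e1 : (Matrix.scalar _ x - θ).mulVec ψ = (-h) • u := by
      rw [Matrix.sub_mulVec, hh]
      ext i
      simp [Matrix.scalar_apply, Matrix.mulVec_diagonal]
    have e2 := congrArg (Matrix.scalar _ x - θ).adjugate.mulVec e1
    rw [Matrix.mulVec_mulVec, Matrix.adjugate_mul, Matrix.mulVec_smul, ← eval_Phi,
      ← Nmat_veron, Matrix.smul_mulVec, Matrix.one_mulVec, ← Matrix.eval_charpoly] at e2
    have hx' : eval x θ.charpoly ≠ 0 := hx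
    have hh0 : h ≠ 0 := by
      rintro rfl
      rw [neg_zero, zero_smul] at e2
      exact (smul_ne_zero hx' hψ0) e2
    refine ⟨(-h)⁻¹ * eval x θ.charpoly, ?_⟩
    have e3 : (Nmat θ u).mulVec (veron n ![x, 1]) = ((-h)⁻¹ * eval x θ.charpoly) • ψ := by
      rw [mul_smul, e2, smul_smul, inv_mul_cancel₀ (neg_ne_zero.2 hh0), one_smul]
    rw [← Matrix.mulVec_mulVec, e3, Matrix.mulVec_smul, hψ, Matrix.mulVec_mulVec,
      Matrix.nonsing_inv_mul _ hM, Matrix.one_mulVec])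
  have hN : Nmat θ u = c • M := by
    have := congrArg (fun A => M * A) hc
    simpa [← Matrix.mul_assoc, Matrix.mul_nonsing_inv _ hM] using this
  refine ⟨c, ?_, hN⟩
  rintro rfl
  apply hu
  rw [← Nmat_inf θ u, hN]; simp

lemma Nmat_conj {n : ℕ} (θ : Matrix (Fin (n + 1)) (Fin (n + 1)) ℂ) (u : Fin (n + 1) → ℂ)
    (y : Fin (n + 1) → ℂ) :
    ∃ b : ℂ, θ.mulVec ((Nmat θ u).mulVec y) = (Nmat θ u).mulVec ((Jmat n).mulVec y) + b • u := by
  have hcol : ∀ z : Fin (n + 1) → ℂ, (Nmat θ u).mulVec z = ∑ k, z k • cv θ u k := by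
    intro z
    ext r
    simp [Matrix.mulVec, dotProduct, Nmat, cv, mul_comm]
  refine ⟨- ∑ k : Fin (n + 1), y k * θ.charpoly.coeff k, ?_⟩
  rw [hcol, hcol, Matrix.mulVec_sum]
  simp only [Matrix.mulVec_smul]
  rw [Fin.sum_univ_succ, Fin.sum_univ_castSucc (n := n)
    (f := fun k => (Jmat n).mulVec y k • cv θ u k), Jmat_mulVec_last,
    Fin.sum_univ_succ (f := fun k : Fin (n + 1) => y k * θ.charpoly.coeff k)]
  have e0 : θ.mulVec (cv θ u 0) = - θ.charpoly.coeff 0 • u := by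
    have := cv_zero θ u
    rw [neg_smul]; exact eq_neg_of_add_eq_zero_left this.symm
  have e1 : ∀ k : Fin n, θ.mulVec (cv θ u ((k : ℕ) + 1)) =
      cv θ u (k : ℕ) - θ.charpoly.coeff (k + 1) • u := by
    intro k
    rw [cv_succ θ u k]; simp
  have e2 : ∀ k : Fin n, (Jmat n).mulVec y k.castSucc = y k.succ := by
    intro k
    rw [Jmat_mulVec_lt _ _ (by simp)]
    rfl
  simp only [e0, e1, e2, neg_smul, smul_neg, smul_sub, Finset.sum_sub_distrib, zero_smul, add_zero,
    add_smul, Finset.sum_smul, mul_smul, Fin.val_zero, Fin.val_succ, Fin.val_castSucc, Finset.sum_neg_distrib, neg_add]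
  abel

lemma mem_cone_of_theta {n : ℕ} (θ : Matrix (Fin (n + 1)) (Fin (n + 1)) ℂ) (u : Fin (n + 1) → ℂ)
    (hN : IsUnit (Nmat θ u).det) (z : Fin (n + 1) → ℂ) (hz : z ≠ 0) (a b : ℂ)
    (h : θ.mulVec z = a • z + b • u) : z ∈ cone (Nmat θ u) := by
  set N := Nmat θ u with hNdef
  set y := N⁻¹.mulVec z with hy
  have hzy : z = N.mulVec y := by
    rw [hy, Matrix.mulVec_mulVec, Matrix.mul_nonsing_inv _ hN, Matrix.one_mulVec]
  obtain ⟨b', hb'⟩ := Nmat_conj θ u y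
  rw [← hNdef, ← hzy, h] at hb'
  have hinf : u = N.mulVec (Pi.single (Fin.last n) 1) := by
    rw [← veron_inf, hNdef, Nmat_inf]
  have e : N.mulVec ((Jmat n).mulVec y) =
      N.mulVec (a • y + (b - b') • Pi.single (Fin.last n) 1) := by
    rw [Matrix.mulVec_add, Matrix.mulVec_smul, Matrix.mulVec_smul, ← hinf, ← hzy, sub_smul,
      ← add_sub_assoc, hb']
    abel
  have e2 : (Jmat n).mulVec y = a • y + (b - b') • Pi.single (Fin.last n) 1 := by
    have := congrArg N⁻¹.mulVec e
    simpa only [Matrix.mulVec_mulVec, ← Matrix.mul_assoc, Matrix.nonsing_inv_mul _ hN,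
      Matrix.one_mulVec, Matrix.one_mul] using this
  have e3 : ∀ k (hk : k < n + 1), y ⟨k, hk⟩ = a ^ k * y 0 := by
    intro k
    induction k with
    | zero => intro hk; simp
    | succ k ih =>
      intro hk
      have h1 := congrFun e2 ⟨k, by omega⟩
      rw [Jmat_mulVec_lt _ _ hk] at h1
      have hne : (⟨k, by omega⟩ : Fin (n + 1)) ≠ Fin.last n := by
        intro h; have := congrArg Fin.val h; simp at this; omega
      simp [hne, ih (by omega)] at h1
      rw [h1]; ring
  have e4 : y = y 0 • veron n ![a, 1] := by
    ext k
    rw [Pi.smul_apply, veron_aff, e3 k k.2, smul_eq_mul, mul_comm]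
  rw [cone_iff]
  left
  refine ⟨y 0, ?_, a, ?_⟩
  · intro h0
    rw [h0, zero_smul] at e4
    apply hz; rw [hzy, e4, Matrix.mulVec_zero]
  · rw [hzy]
    conv_lhs => rw [e4]
    rw [Matrix.mulVec_smul]

end Part2

section Part3
open Polynomial

def PolF {σ : Type*} (f : (σ → ℂ) → ℂ) : Prop :=
  ∃ F : MvPolynomial σ ℂ, ∀ x, MvPolynomial.eval x F = f x

def PolX {σ : Type*} (f : (σ → ℂ) → ℂ[X]) : Prop :=
  ∃ F : (MvPolynomial σ ℂ)[X], ∀ x, F.map (MvPolynomial.eval x) = f x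

section
variable {σ : Type*}

lemma PolF.const (c : ℂ) : PolF (σ := σ) (fun _ => c) := ⟨MvPolynomial.C c, fun x => by simp⟩
lemma PolF.var (s : σ) : PolF (fun x : σ → ℂ => x s) := ⟨MvPolynomial.X s, fun x => by simp⟩
lemma PolF.add {f g : (σ → ℂ) → ℂ} (hf : PolF f) (hg : PolF g) :
    PolF (fun x => f x + g x) := by
  obtain ⟨F, hF⟩ := hf; obtain ⟨G, hG⟩ := hg
  exact ⟨F + G, fun x => by simp [hF, hG]⟩
lemma PolF.sub {f g : (σ → ℂ) → ℂ} (hf : PolF f) (hg : PolF g) :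
    PolF (fun x => f x - g x) := by
  obtain ⟨F, hF⟩ := hf; obtain ⟨G, hG⟩ := hg
  exact ⟨F - G, fun x => by simp [hF, hG]⟩
lemma PolF.mul {f g : (σ → ℂ) → ℂ} (hf : PolF f) (hg : PolF g) :
    PolF (fun x => f x * g x) := by
  obtain ⟨F, hF⟩ := hf; obtain ⟨G, hG⟩ := hg
  exact ⟨F * G, fun x => by simp [hF, hG]⟩
lemma PolF.sum {ι : Type*} (s : Finset ι) {f : ι → (σ → ℂ) → ℂ} (hf : ∀ i, PolF (f i)) :
    PolF (fun x => ∑ i ∈ s, f i x) := by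
  choose F hF using hf
  exact ⟨∑ i ∈ s, F i, fun x => by simp [hF, map_sum]⟩
lemma PolF.prod {ι : Type*} (s : Finset ι) {f : ι → (σ → ℂ) → ℂ} (hf : ∀ i, PolF (f i)) :
    PolF (fun x => ∏ i ∈ s, f i x) := by
  choose F hF using hf
  exact ⟨∏ i ∈ s, F i, fun x => by simp [hF, map_prod]⟩
lemma PolF.det {ι : Type*} [Fintype ι] [DecidableEq ι] {M : (σ → ℂ) → Matrix ι ι ℂ}
    (hf : ∀ i j, PolF (fun x => M x i j)) : PolF (fun x => (M x).det) := by
  choose F hF using hf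
  refine ⟨(Matrix.of F).det, fun x => ?_⟩
  rw [RingHom.map_det]
  congr 1
  ext i j
  simp [hF]
lemma PolF.adjugate {ι : Type*} [Fintype ι] [DecidableEq ι] {M : (σ → ℂ) → Matrix ι ι ℂ}
    (hf : ∀ i j, PolF (fun x => M x i j)) (i j : ι) :
    PolF (fun x => (M x).adjugate i j) := by
  choose F hF using hf
  refine ⟨(Matrix.of F).adjugate i j, fun x => ?_⟩
  have : M x = (MvPolynomial.eval x).mapMatrix (Matrix.of F) := by
    ext i j
    simp [hF]
  beta_reduce
  rw [this, ← RingHom.map_adjugate]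
  simp

lemma PolX.of_C {f : (σ → ℂ) → ℂ} (hf : PolF f) : PolX (fun x => C (f x)) := by
  obtain ⟨F, hF⟩ := hf
  exact ⟨C F, fun x => by simp [hF]⟩
lemma PolX.X : PolX (fun _ : σ → ℂ => (X : ℂ[X])) := ⟨Polynomial.X, fun x => by simp⟩
lemma PolX.const (p : ℂ[X]) : PolX (fun _ : σ → ℂ => p) :=
  ⟨p.map MvPolynomial.C, fun x => by
    rw [Polynomial.map_map]
    have : (MvPolynomial.eval x).comp MvPolynomial.C = RingHom.id ℂ := by ext; simp
    rw [this, Polynomial.map_id]⟩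
lemma PolX.add {f g : (σ → ℂ) → ℂ[X]} (hf : PolX f) (hg : PolX g) :
    PolX (fun x => f x + g x) := by
  obtain ⟨F, hF⟩ := hf; obtain ⟨G, hG⟩ := hg
  exact ⟨F + G, fun x => by simp [hF, hG]⟩
lemma PolX.sub {f g : (σ → ℂ) → ℂ[X]} (hf : PolX f) (hg : PolX g) :
    PolX (fun x => f x - g x) := by
  obtain ⟨F, hF⟩ := hf; obtain ⟨G, hG⟩ := hg
  exact ⟨F - G, fun x => by simp [hF, hG]⟩
lemma PolX.mul {f g : (σ → ℂ) → ℂ[X]} (hf : PolX f) (hg : PolX g) :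
    PolX (fun x => f x * g x) := by
  obtain ⟨F, hF⟩ := hf; obtain ⟨G, hG⟩ := hg
  exact ⟨F * G, fun x => by simp [hF, hG]⟩
lemma PolX.sum {ι : Type*} (s : Finset ι) {f : ι → (σ → ℂ) → ℂ[X]}
    (hf : ∀ i, PolX (f i)) :
    PolX (fun x => ∑ i ∈ s, f i x) := by
  choose F hF using hf
  exact ⟨∑ i ∈ s, F i, fun x => by simp [hF, Polynomial.map_sum]⟩
lemma PolX.adjugate {ι : Type*} [Fintype ι] [DecidableEq ι]
    {M : (σ → ℂ) → Matrix ι ι ℂ[X]}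
    (hf : ∀ i j, PolX (fun x => M x i j)) (i j : ι) :
    PolX (fun x => (M x).adjugate i j) := by
  choose F hF using hf
  refine ⟨(Matrix.of F).adjugate i j, fun x => ?_⟩
  have : M x = (Polynomial.mapRingHom (MvPolynomial.eval x)).mapMatrix (Matrix.of F) := by
    ext1 i j
    simp [hF]
  beta_reduce
  rw [this, ← RingHom.map_adjugate]
  simp
lemma PolX.coeff {f : (σ → ℂ) → ℂ[X]} (hf : PolX f) (k : ℕ) :
    PolF (fun x => (f x).coeff k) := by
  obtain ⟨F, hF⟩ := hf
  exact ⟨F.coeff k, fun x => by beta_reduce; rw [← hF, coeff_map]⟩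

lemma PolX.resultant {f g : (σ → ℂ) → ℂ[X]} (hf : PolX f) (hg : PolX g) (m k : ℕ) :
    PolF (fun x => Polynomial.resultant (f x) (g x) m k) := by
  obtain ⟨F, hF⟩ := hf; obtain ⟨G, hG⟩ := hg
  exact ⟨Polynomial.resultant F G m k, fun x => by beta_reduce; rw [← hF, ← hG, resultant_map_map]⟩
lemma PolX.derivative {f : (σ → ℂ) → ℂ[X]} (hf : PolX f) :
    PolX (fun x => derivative (f x)) := by
  obtain ⟨F, hF⟩ := hf
  exact ⟨Polynomial.derivative F, fun x => by beta_reduce; rw [← hF, derivative_map]⟩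

/-- combine finitely many open conditions -/
lemma exists_common {ι : Type*} [Finite ι] {f : ι → (σ → ℂ) → ℂ} (hf : ∀ i, PolF (f i))
    (hx : ∀ i, ∃ x, f i x ≠ 0) : ∃ x, ∀ i, f i x ≠ 0 := by
  classical
  haveI := Fintype.ofFinite ι
  choose F hF using hf
  have h : ∏ i, F i ≠ 0 := by
    rw [Finset.prod_ne_zero_iff]
    rintro i - h0
    obtain ⟨x, hx⟩ := hx i
    rw [← hF, h0] at hx
    simp at hx
  by_contra hcon
  push Not at hcon
  apply h
  apply MvPolynomial.funext
  intro x
  obtain ⟨i, hi⟩ := hcon x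
  rw [map_prod, map_zero]
  exact Finset.prod_eq_zero (Finset.mem_univ i) (by rw [hF, hi])

def SplitD (m : ℕ) (g : ℂ[X]) : Prop := g.coeff m ≠ 0 ∧ {x | g.eval x = 0}.ncard = m

def discD (m : ℕ) (g : ℂ[X]) : ℂ :=
  g.coeff m * Polynomial.resultant g (Polynomial.derivative g) m (m - 1)

lemma splitD_iff {m : ℕ} {g : ℂ[X]} (hg : g.natDegree ≤ m) : discD m g ≠ 0 ↔ SplitD m g := by
  classical
  rw [discD, mul_ne_zero_iff, SplitD]
  refine and_congr_right fun h => ?_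
  have hd : g.natDegree = m := le_antisymm hg (le_natDegree_of_ne_zero h)
  have hg0 : g ≠ 0 := by rintro rfl; simp at h
  have hr := Polynomial.resultant_eq_prod_eval g (derivative g) (m - 1)
    ((natDegree_derivative_le g).trans (by omega)) (IsAlgClosed.splits g)
  rw [hd] at hr
  rw [hr]
  have hs : {x | g.eval x = 0}.ncard = g.roots.toFinset.card := by
    rw [← Set.ncard_coe_finset]
    congr 1
    ext x
    simp [hg0]
  have hcard : g.roots.card = m := by
    rw [← hd]; exact (splits_iff_card_roots.1 (IsAlgClosed.splits g))
  have hnod : g.roots.toFinset.card = m ↔ g.roots.Nodup := by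
    rw [← hcard, Multiset.toFinset_card_eq_card_iff_nodup]
  rw [hs, hnod]
  have hl : g.leadingCoeff ^ (m - 1) ≠ 0 := pow_ne_zero _ (leadingCoeff_ne_zero.2 hg0)
  rw [mul_ne_zero_iff, and_iff_right hl, Ne, Multiset.prod_eq_zero_iff, Multiset.nodup_iff_count_le_one]
  constructor
  · intro h1 a
    by_contra h2
    apply h1
    rw [Multiset.mem_map]
    rw [count_roots, not_le, one_lt_rootMultiplicity_iff_isRoot hg0] at h2
    exact ⟨a, (mem_roots hg0).2 h2.1, h2.2⟩
  · rintro h1 h2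
    rw [Multiset.mem_map] at h2
    obtain ⟨a, ha, ha2⟩ := h2
    have := (one_lt_rootMultiplicity_iff_isRoot hg0).2 ⟨(mem_roots hg0).1 ha, ha2⟩
    rw [← count_roots] at this
    exact absurd (h1 a) (not_le.2 this)

lemma PolX.discD {f : (σ → ℂ) → ℂ[X]} (hf : PolX f) (m : ℕ) :
    PolF (fun x => discD m (f x)) :=
  (hf.coeff m).mul (hf.resultant hf.derivative _ _)

/-- Lemma L -/
lemma kernel_family {r m : Type*} [Fintype r] [Fintype m] [DecidableEq r] [DecidableEq m]
    (hcard : Fintype.card r + 1 = Fintype.card m)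
    (T : (σ → ℂ) → Matrix r m ℂ) (hT : ∀ i j, PolF (fun x => T x i j))
    (x0 : σ → ℂ) (z0 : m → ℂ) (hz0 : z0 ≠ 0) (hTz : (T x0).mulVec z0 = 0)
    (hker : ∀ z, (T x0).mulVec z = 0 → ∃ c : ℂ, z = c • z0) :
    ∃ (D : (σ → ℂ) → ℂ) (z : (σ → ℂ) → m → ℂ), PolF D ∧ (∀ j, PolF (fun x => z x j)) ∧
      D x0 ≠ 0 ∧ z x0 = z0 ∧ (∀ x, (T x).mulVec (z x) = 0) ∧
      ∀ x, D x ≠ 0 → ∀ y, (T x).mulVec y = 0 → ∃ c : ℂ, y = c • z x := by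
  obtain ⟨j0, hj0⟩ : ∃ j, z0 j ≠ 0 := by
    by_contra h; push Not at h; exact hz0 (funext h)
  have hc : Fintype.card m = Fintype.card (Option r) := by simp [← hcard]
  let e : m ≃ Option r := Fintype.equivOfCardEq hc
  -- square matrix
  let S : (σ → ℂ) → Matrix m m ℂ := fun x i j =>
    match e i with
    | none => if j = j0 then (z0 j0)⁻¹ else 0
    | some k => T x k j
  have hS : ∀ i j, PolF (fun x => S x i j) := by
    intro i j
    simp only [S]
    cases e i with
    | none => exact PolF.const _
    | some k => exact hT k j
  let i0 := e.symm none
  have hSn : ∀ x y, (S x).mulVec y i0 = (z0 j0)⁻¹ * y j0 := by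
    intro x y
    simp [S, Matrix.mulVec, dotProduct, i0]
  have hSs : ∀ x y k, (S x).mulVec y (e.symm (some k)) = (T x).mulVec y k := by
    intro x y k
    simp [S, Matrix.mulVec, dotProduct]
  have hSy : ∀ x y, (T x).mulVec y = 0 → (S x).mulVec y = Pi.single i0 ((z0 j0)⁻¹ * y j0) := by
    intro x y hy
    ext i
    obtain ⟨o, rfl⟩ := e.symm.surjective i
    cases o with
    | none => rw [hSn]; simp [i0]
    | some k =>
      rw [hSs, hy, Pi.single_eq_of_ne]; · rfl
      simp [i0]
  have hD0 : (S x0).det ≠ 0 := by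
    intro h0
    obtain ⟨v, hv, hSv⟩ := Matrix.exists_mulVec_eq_zero_iff.2 h0
    have hTv : (T x0).mulVec v = 0 := by
      ext k; rw [← hSs, hSv]; rfl
    obtain ⟨c, rfl⟩ := hker v hTv
    have := hSn x0 (c • z0)
    rw [hSv] at this
    simp [hj0] at this
    exact hv (by rw [this, zero_smul])
  refine ⟨fun x => (S x).det, fun x j => ((S x0).det)⁻¹ * (S x).adjugate j i0, PolF.det hS,
    fun j => (PolF.const _).mul (PolF.adjugate hS _ _), hD0, ?_, ?_, ?_⟩
  · have h1 := hSy x0 z0 hTz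
    rw [inv_mul_cancel₀ hj0] at h1
    have h2 := congrArg (S x0).adjugate.mulVec h1
    rw [Matrix.mulVec_mulVec, Matrix.adjugate_mul, Matrix.smul_mulVec, Matrix.one_mulVec] at h2
    ext j
    have h3 := congrFun h2 j
    simp at h3
    beta_reduce
    rw [← h3, ← mul_assoc, inv_mul_cancel₀ hD0, one_mul]
  · intro x
    ext k
    rw [← hSs]
    have : (fun j => ((S x0).det)⁻¹ * (S x).adjugate j i0) =
        ((S x0).det)⁻¹ • (S x).adjugate.mulVec (Pi.single i0 1) := by
      ext j; simp
    beta_reduce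
    rw [this, Matrix.mulVec_smul, Matrix.mulVec_mulVec, Matrix.mul_adjugate, Matrix.smul_mulVec,
      Matrix.one_mulVec]
    simp [i0]
  · intro x hx y hy
    have h1 := hSy x y hy
    have h2 := congrArg (S x).adjugate.mulVec h1
    rw [Matrix.mulVec_mulVec, Matrix.adjugate_mul, Matrix.smul_mulVec, Matrix.one_mulVec] at h2
    refine ⟨(S x).det⁻¹ * ((z0 j0)⁻¹ * y j0) * (S x0).det, ?_⟩
    ext j
    have h3 := congrFun h2 j
    simp at h3
    simp only [Pi.smul_apply, smul_eq_mul]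
    have hx' : (S x).det ≠ 0 := hx
    field_simp
    field_simp at h3
    linear_combination h3
end

end Part3

section Part4
open Polynomial

/-- rows u, y, columns of B -/
def alp {m : ℕ} (u : Fin (m + 2) → ℂ) (B : Matrix (Fin (m + 2)) (Fin m) ℂ) :
    (Fin (m + 2) → ℂ) →ₗ[ℂ] ℂ :=
  (Matrix.detRowAlternating (n := Fin (m + 2)) (R := ℂ)).toMultilinearMap.toLinearMap
    (Fin.cons u (Fin.cons 0 (fun k r => B r k))) 1

lemma alp_apply {m : ℕ} (u : Fin (m + 2) → ℂ) (B : Matrix (Fin (m + 2)) (Fin m) ℂ)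
    (y : Fin (m + 2) → ℂ) : alp u B y =
      Matrix.det (Matrix.of (Fin.cons u (Fin.cons y (fun k r => B r k)) :
        Fin (m + 2) → Fin (m + 2) → ℂ)) := by
  have : Function.update (Fin.cons u (Fin.cons 0 (fun k r => B r k)) :
        Fin (m + 2) → Fin (m + 2) → ℂ) 1 y = Fin.cons u (Fin.cons y (fun k r => B r k)) := by
    rw [show (1 : Fin (m + 2)) = Fin.succ 0 from rfl, ← Fin.cons_update, Fin.update_cons_zero]
  rw [← this]
  rfl

lemma alp_u {m : ℕ} (u : Fin (m + 2) → ℂ) (B : Matrix (Fin (m + 2)) (Fin m) ℂ) :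
    alp u B u = 0 := by
  rw [alp_apply]
  exact Matrix.det_zero_of_row_eq (i := 0) (j := 1) (by simp) rfl

lemma alp_col {m : ℕ} (u : Fin (m + 2) → ℂ) (B : Matrix (Fin (m + 2)) (Fin m) ℂ) (k : Fin m) :
    alp u B (fun r => B r k) = 0 := by
  rw [alp_apply]
  refine Matrix.det_zero_of_row_eq (i := 1) (j := k.succ.succ) ?_ rfl
  intro h
  have := congrArg Fin.val h
  simp at this

lemma alp_sp {m : ℕ} (u : Fin (m + 2) → ℂ) (B : Matrix (Fin (m + 2)) (Fin m) ℂ)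
    {w : Fin (m + 2) → ℂ} (hw : w ∈ sp B) : alp u B w = 0 := by
  have : sp B ≤ LinearMap.ker (alp u B) := by
    rw [Submodule.span_le]
    rintro _ ⟨k, rfl⟩
    exact alp_col u B k
  exact this hw

lemma alp_sum {m : ℕ} (u : Fin (m + 2) → ℂ) (B : Matrix (Fin (m + 2)) (Fin m) ℂ)
    (y : Fin (m + 2) → ℂ) : alp u B y = ∑ r, alp u B (Pi.single r 1) * y r := by
  rw [LinearMap.pi_apply_eq_sum_univ]
  refine Finset.sum_congr rfl fun r _ => ?_
  rw [smul_eq_mul, mul_comm]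
  congr 2
  ext s
  simp [Pi.single_apply, eq_comm]

lemma alp_notMem {m : ℕ} (u Q : Fin (m + 2) → ℂ) (B : Matrix (Fin (m + 2)) (Fin m) ℂ)
    (h : alp u B Q ≠ 0) : u ∉ sp B := by
  rw [alp_apply] at h
  have hli := Matrix.linearIndependent_rows_of_det_ne_zero h
  have hli' : LinearIndependent ℂ (Fin.cons u (Fin.cons Q (fun k r => B r k)) :
        Fin (m + 2) → Fin (m + 2) → ℂ) := hli
  rw [linearIndependent_finCons] at hli'
  intro hu
  apply hli'.2
  refine Submodule.span_mono ?_ hu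
  rintro _ ⟨k, rfl⟩
  exact ⟨k.succ, rfl⟩

lemma alp_zero {m : ℕ} (u Q : Fin (m + 2) → ℂ) (B : Matrix (Fin (m + 2)) (Fin m) ℂ)
    (h : alp u B Q ≠ 0) (y : Fin (m + 2) → ℂ) (hy : alp u B y = 0) :
    ∃ w ∈ sp B, ∃ a : ℂ, y = w + a • u := by
  have h' := h
  rw [alp_apply] at h'
  set R := Matrix.of (Fin.cons u (Fin.cons Q (fun k r => B r k)) :
        Fin (m + 2) → Fin (m + 2) → ℂ) with hR
  set c := Matrix.vecMul y R⁻¹ with hc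
  have e : y = ∑ i, c i • R i := by
    have : y = Matrix.vecMul c R := by
      rw [hc, Matrix.vecMul_vecMul, Matrix.nonsing_inv_mul _ h'.isUnit, Matrix.vecMul_one]
    conv_lhs => rw [this]
    ext r
    simp [Matrix.vecMul, dotProduct]
  rw [Fin.sum_univ_succ, Fin.sum_univ_succ] at e
  have e2 : y = c 0 • u + (c 1 • Q + ∑ k : Fin m, c k.succ.succ • (fun r => B r k)) := e
  have hs : (∑ k : Fin m, c k.succ.succ • (fun r => B r k)) ∈ sp B :=
    Submodule.sum_mem _ fun k _ => Submodule.smul_mem _ _ (Submodule.subset_span ⟨k, rfl⟩)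
  have hc1 : c 1 = 0 := by
    rw [e2, map_add, map_add, map_smul, map_smul, alp_u, alp_sp u B hs] at hy
    simpa [h] using hy
  refine ⟨_, hs, c 0, ?_⟩
  rw [hc1, zero_smul, zero_add] at e2
  exact e2.trans (add_comm _ _)

/-- point functionals -/
def mm {m : ℕ} (u q : Fin (m + 2) → ℂ) (a b : Fin (m + 2)) : ℂ := u a * q b - u b * q a

def pf {m : ℕ} (u q : Fin (m + 2) → ℂ) (k : Fin m) : Fin (m + 2) → ℂ := fun r =>
  (if r = k.castSucc.succ then mm u q 0 (Fin.last _) else 0) -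
  (if r = 0 then mm u q k.castSucc.succ (Fin.last _) else 0) -
  (if r = Fin.last _ then mm u q 0 k.castSucc.succ else 0)

lemma pf_apply {m : ℕ} (u q : Fin (m + 2) → ℂ) (k : Fin m) (y : Fin (m + 2) → ℂ) :
    pf u q k ⬝ᵥ y = mm u q 0 (Fin.last _) * y k.castSucc.succ -
      mm u q k.castSucc.succ (Fin.last _) * y 0 - mm u q 0 k.castSucc.succ * y (Fin.last _) := by
  simp [pf, dotProduct, sub_mul, Finset.sum_sub_distrib]

lemma pf_of {m : ℕ} (u q : Fin (m + 2) → ℂ) (k : Fin m) (a b : ℂ) :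
    pf u q k ⬝ᵥ (a • q + b • u) = 0 := by
  rw [pf_apply]; simp [mm]; ring

lemma pf_iff {m : ℕ} (u q : Fin (m + 2) → ℂ) (h : mm u q 0 (Fin.last _) ≠ 0)
    (y : Fin (m + 2) → ℂ) (hy : ∀ k, pf u q k ⬝ᵥ y = 0) : ∃ a b : ℂ, y = a • q + b • u := by
  have h' : u 0 * q (Fin.last _) - u (Fin.last _) * q 0 ≠ 0 := h
  refine ⟨(u 0 * y (Fin.last _) - u (Fin.last _) * y 0) / mm u q 0 (Fin.last _),
    (q (Fin.last _) * y 0 - q 0 * y (Fin.last _)) / mm u q 0 (Fin.last _), ?_⟩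
  ext r
  refine Fin.cases ?_ (fun r => ?_) r
  · simp only [Pi.add_apply, Pi.smul_apply, smul_eq_mul, mm]
    field_simp
    ring
  · refine Fin.lastCases ?_ (fun k => ?_) r
    · simp only [Pi.add_apply, Pi.smul_apply, smul_eq_mul, mm, Fin.succ_last]
      field_simp
      ring
    · have := hy k
      rw [pf_apply] at this
      simp only [mm] at this
      simp only [Pi.add_apply, Pi.smul_apply, smul_eq_mul, mm]
      field_simp
      linear_combination this

abbrev RI (m q l : ℕ) := ((Fin q × Fin m) ⊕ (Fin l × Fin m)) ⊕ (Fin (m + 2) ⊕ Unit)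

def rowA {m q l : ℕ} (u : Fin (m + 2) → ℂ) (p : Fin q → Fin (m + 2) → ℂ)
    (B : Fin l → Matrix (Fin (m + 2)) (Fin m) ℂ) : RI m q l → Fin (m + 2) → ℂ
  | .inl (.inl (i, k)) => pf u (p i) k
  | .inl (.inr (j, _)) => fun r => alp u (B j) (Pi.single r 1)
  | .inr (.inl _) => Pi.single (Fin.last _) 1
  | .inr (.inr _) => Pi.single 0 1

def rowB {m q l : ℕ} (p : Fin q → Fin (m + 2) → ℂ)
    (B : Fin l → Matrix (Fin (m + 2)) (Fin m) ℂ) : RI m q l → Fin (m + 2) → ℂ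
  | .inl (.inl (i, _)) => p i
  | .inl (.inr (j, k)) => fun r => B j r k
  | .inr (.inl s) => Pi.single s 1
  | .inr (.inr _) => Pi.single 0 1

def Sol {m q l : ℕ} (u : Fin (m + 2) → ℂ) (p : Fin q → Fin (m + 2) → ℂ)
    (B : Fin l → Matrix (Fin (m + 2)) (Fin m) ℂ) (θ : Matrix (Fin (m + 2)) (Fin (m + 2)) ℂ) :
    Prop := ∀ ι : RI m q l, rowA u p B ι ⬝ᵥ θ.mulVec (rowB p B ι) = 0

structure Cond {m q l : ℕ} (u : Fin (m + 2) → ℂ) (p : Fin q → Fin (m + 2) → ℂ)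
    (B : Fin l → Matrix (Fin (m + 2)) (Fin m) ℂ) (θ : Matrix (Fin (m + 2)) (Fin (m + 2)) ℂ) :
    Prop where
  pt : ∀ i, ∃ a b : ℂ, θ.mulVec (p i) = a • p i + b • u
  la : ∀ j, ∀ b ∈ sp (B j), ∃ w ∈ sp (B j), ∃ h : ℂ, θ.mulVec b = w + h • u
  last : ∀ s, θ (Fin.last _) s = 0
  zz : θ 0 0 = 0

lemma la_of_cols {m : ℕ} (u : Fin (m + 2) → ℂ) (B : Matrix (Fin (m + 2)) (Fin m) ℂ)
    (θ : Matrix (Fin (m + 2)) (Fin (m + 2)) ℂ)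
    (h : ∀ k, ∃ w ∈ sp B, ∃ h : ℂ, θ.mulVec (fun r => B r k) = w + h • u) :
    ∀ b ∈ sp B, ∃ w ∈ sp B, ∃ h : ℂ, θ.mulVec b = w + h • u := by
  intro b hb
  induction hb using Submodule.span_induction with
  | mem z hz =>
    obtain ⟨k, rfl⟩ := hz
    exact h k
  | zero => exact ⟨0, Submodule.zero_mem _, 0, by simp⟩
  | add y z _ _ hy hz =>
    obtain ⟨w, hw, h, e⟩ := hy
    obtain ⟨w', hw', h', e'⟩ := hz
    refine ⟨w + w', Submodule.add_mem _ hw hw', h + h', ?_⟩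
    rw [Matrix.mulVec_add, e, e', add_smul]; abel
  | smul a y _ hy =>
    obtain ⟨w, hw, h, e⟩ := hy
    refine ⟨a • w, Submodule.smul_mem _ _ hw, a * h, ?_⟩
    rw [Matrix.mulVec_smul, e, smul_add, smul_smul]

lemma sol_of_cond {m q l : ℕ} {u : Fin (m + 2) → ℂ} {p : Fin q → Fin (m + 2) → ℂ}
    {B : Fin l → Matrix (Fin (m + 2)) (Fin m) ℂ} {θ : Matrix (Fin (m + 2)) (Fin (m + 2)) ℂ}
    (h : Cond u p B θ) : Sol u p B θ := by
  rintro ((⟨i, k⟩ | ⟨j, k⟩) | (s | _))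
  · obtain ⟨a, b, e⟩ := h.pt i
    simp only [rowA, rowB]
    rw [e, pf_of]
  · obtain ⟨w, hw, c, e⟩ := h.la j _ (Submodule.subset_span ⟨k, rfl⟩)
    simp only [rowA, rowB]
    rw [e, dotProduct, ← alp_sum, map_add, map_smul, alp_u, alp_sp _ _ hw]
    simp
  · simp [rowA, rowB, h.last]
  · simp [rowA, rowB, h.zz]

lemma cond_of_sol {m q l : ℕ} {u : Fin (m + 2) → ℂ} {p : Fin q → Fin (m + 2) → ℂ}
    {B : Fin l → Matrix (Fin (m + 2)) (Fin m) ℂ} {θ : Matrix (Fin (m + 2)) (Fin (m + 2)) ℂ}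
    (hp : ∀ i, mm u (p i) 0 (Fin.last _) ≠ 0) (hB : ∀ j, ∃ Q, alp u (B j) Q ≠ 0)
    (h : Sol u p B θ) : Cond u p B θ := by
  constructor
  · intro i
    exact pf_iff u (p i) (hp i) _ fun k => h (.inl (.inl (i, k)))
  · intro j
    apply la_of_cols
    intro k
    obtain ⟨Q, hQ⟩ := hB j
    apply alp_zero u Q (B j) hQ
    rw [alp_sum]
    exact h (.inl (.inr (j, k)))
  · intro s
    have := h (.inr (.inl s))
    simpa [rowA, rowB] using this
  · have := h (.inr (.inr ()))
    simpa [rowA, rowB] using this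

def gj {m : ℕ} (u : Fin (m + 2) → ℂ) (B : Matrix (Fin (m + 2)) (Fin m) ℂ)
    (θ : Matrix (Fin (m + 2)) (Fin (m + 2)) ℂ) : ℂ[X] :=
  ∑ r, C (alp u B (Pi.single r 1)) * Phi θ u r

lemma gj_eval {m : ℕ} (u : Fin (m + 2) → ℂ) (B : Matrix (Fin (m + 2)) (Fin m) ℂ)
    (θ : Matrix (Fin (m + 2)) (Fin (m + 2)) ℂ) (x : ℂ) :
    (gj u B θ).eval x = alp u B (fun r => (Phi θ u r).eval x) := by
  rw [alp_sum, gj, eval_finsetSum]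
  simp

lemma gj_coeff {m : ℕ} (u : Fin (m + 2) → ℂ) (B : Matrix (Fin (m + 2)) (Fin m) ℂ)
    (θ : Matrix (Fin (m + 2)) (Fin (m + 2)) ℂ) (k : ℕ) :
    (gj u B θ).coeff k = alp u B (cv θ u k) := by
  rw [alp_sum, gj, finsetSum_coeff]
  simp [cv]

lemma gj_natDegree {m : ℕ} (u : Fin (m + 2) → ℂ) (B : Matrix (Fin (m + 2)) (Fin m) ℂ)
    (θ : Matrix (Fin (m + 2)) (Fin (m + 2)) ℂ) : (gj u B θ).natDegree ≤ m := by
  rw [natDegree_le_iff_coeff_eq_zero]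
  intro k hk
  rw [gj_coeff]
  rcases Nat.lt_or_ge (m + 1) k with h | h
  · rw [cv_big _ _ _ h, map_zero]
  · have : k = m + 1 := by omega
    rw [this, cv_top, alp_u]

lemma gj_top {m : ℕ} (u : Fin (m + 2) → ℂ) (B : Matrix (Fin (m + 2)) (Fin m) ℂ)
    (θ : Matrix (Fin (m + 2)) (Fin (m + 2)) ℂ) : (gj u B θ).coeff m = alp u B (θ.mulVec u) := by
  rw [gj_coeff, cv_succ, cv_top, map_add, map_smul, alp_u]; simp

end Part4

section Part5
open Polynomial

lemma Phi_theta {n : ℕ} (θ : Matrix (Fin (n + 1)) (Fin (n + 1)) ℂ) (u : Fin (n + 1) → ℂ)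
    (x : ℂ) : ∃ h : ℂ, θ.mulVec (fun r => (Phi θ u r).eval x) =
      x • (fun r => (Phi θ u r).eval x) + h • u := by
  refine ⟨- θ.charpoly.eval x, ?_⟩
  ext r
  have := congrArg (eval x) (Phi_rel θ u r)
  simp [eval_finsetSum] at this
  simp [Matrix.mulVec, dotProduct]
  linear_combination -this

lemma mulVec_inj {n : ℕ} {M : Matrix (Fin (n + 1)) (Fin (n + 1)) ℂ} (hM : IsUnit M.det)
    {y z : Fin (n + 1) → ℂ} (h : M.mulVec y = M.mulVec z) : y = z := by
  have := congrArg (M⁻¹).mulVec h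
  simpa [Matrix.mulVec_mulVec, Matrix.nonsing_inv_mul _ hM] using this

lemma veron_ne {n : ℕ} (x : ℂ) : veron n ![x, 1] ≠ 0 := by
  intro h
  have := congrFun h 0
  rw [veron_aff] at this
  simp at this

lemma inter_ncard {m : ℕ} {u : Fin (m + 2) → ℂ} {B : Matrix (Fin (m + 2)) (Fin m) ℂ}
    {θ : Matrix (Fin (m + 2)) (Fin (m + 2)) ℂ}
    (hQ : ∃ Q, alp u B Q ≠ 0)
    (hla : ∀ b ∈ sp B, ∃ w ∈ sp B, ∃ h : ℂ, θ.mulVec b = w + h • u)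
    (hN : IsUnit (Nmat θ u).det) (hg : SplitD m (gj u B θ)) :
    ({Q : PP (m + 1) | Q.rep ∈ cone (Nmat θ u)} ∩ projSet B).ncard = m := by
  obtain ⟨Q, hQ⟩ := hQ
  have hu := alp_notMem u Q B hQ
  obtain ⟨hg1, hg2⟩ := hg
  rw [gj_top] at hg1
  have hne : ∀ x, (Nmat θ u).mulVec (veron (m + 1) ![x, 1]) ≠ 0 := by
    intro x h
    exact veron_ne x (mulVec_inj hN (h.trans (Matrix.mulVec_zero _).symm))
  set f : ℂ → PP (m + 1) := fun x => Projectivization.mk ℂ _ (hne x) with hf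
  have hfrep : ∀ x, ∃ c : ℂ, c ≠ 0 ∧
      (f x).rep = c • (Nmat θ u).mulVec (veron (m + 1) ![x, 1]) := fun x => rep_mk _ (hne x)
  have himg : {Q : PP (m + 1) | Q.rep ∈ cone (Nmat θ u)} ∩ projSet B =
      f '' {x | (gj u B θ).eval x = 0} := by
    ext P
    constructor
    · rintro ⟨h1, h2⟩
      have h2' : P.rep ∈ sp B := h2
      rcases (cone_iff _ _).1 h1 with ⟨c, hc, x, hx⟩ | ⟨c, hc, hx⟩
      · refine ⟨x, ?_, ?_⟩
        · have h3 := alp_sp u B h2'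
          rw [hx, map_smul, Nmat_veron, ← gj_eval, smul_eq_mul] at h3
          exact (mul_eq_zero.1 h3).resolve_left hc
        · rw [hf, ← Projectivization.mk_rep P, Projectivization.mk_eq_mk_iff']
          refine ⟨c⁻¹, ?_⟩
          rw [hx, smul_smul, inv_mul_cancel₀ hc, one_smul]
      · exfalso
        apply hu
        rw [Nmat_inf] at hx
        have : u = c⁻¹ • P.rep := by rw [hx, smul_smul, inv_mul_cancel₀ hc, one_smul]
        rw [this]
        exact Submodule.smul_mem _ _ h2'
    · rintro ⟨x, hx, rfl⟩
      obtain ⟨c, hc, hr⟩ := hfrep x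
      refine ⟨(cone_iff _ _).2 (Or.inl ⟨c, hc, x, hr⟩), ?_⟩
      change (f x).rep ∈ sp B
      rw [hr]
      apply Submodule.smul_mem
      rw [Nmat_veron]
      have hx' : (gj u B θ).eval x = 0 := hx
      rw [gj_eval] at hx'
      obtain ⟨w, hw, a, e⟩ := alp_zero u Q B hQ _ hx'
      obtain ⟨h, hh⟩ := Phi_theta θ u x
      have h1 : alp u B (θ.mulVec (fun r => (Phi θ u r).eval x)) = 0 := by
        rw [hh, map_add, map_smul, map_smul, hx', alp_u]; simp
      obtain ⟨w', hw', b, e'⟩ := hla w hw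
      rw [e, Matrix.mulVec_add, Matrix.mulVec_smul, e', map_add, map_add, map_smul, map_smul,
        alp_u, alp_sp u B hw'] at h1
      have ha : a = 0 := by simpa [hg1] using h1
      rw [e, ha, zero_smul, add_zero]
      exact hw
  rw [himg, Set.ncard_image_of_injOn, hg2]
  intro x _ y _ hxy
  have hxy' : f x = f y := hxy
  rw [hf, Projectivization.mk_eq_mk_iff'] at hxy'
  obtain ⟨a, ha⟩ := hxy'
  rw [← Matrix.mulVec_smul] at ha
  have := mulVec_inj hN ha
  have h0 := congrFun this 0
  have h1 := congrFun this 1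
  simp [veron_aff] at h0 h1
  rw [h0] at h1
  simpa using h1.symm

/-- normalization of theta -/
lemma theta_normalize {m : ℕ} (θ : Matrix (Fin (m + 2)) (Fin (m + 2)) ℂ) (u : Fin (m + 2) → ℂ)
    (hu : u (Fin.last _) ≠ 0) : ∃ (e : ℂ) (f : Fin (m + 2) → ℂ),
      (∀ s, (θ - e • 1 + Matrix.vecMulVec u f) (Fin.last _) s = 0) ∧
      (θ - e • 1 + Matrix.vecMulVec u f) 0 0 = 0 := by
  set e := θ 0 0 - u 0 * θ (Fin.last _) 0 / u (Fin.last _)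
  refine ⟨e, fun s => ((if s = Fin.last _ then e else 0) - θ (Fin.last _) s) / u (Fin.last _),
    ?_, ?_⟩
  · intro s
    by_cases hs : s = Fin.last _
    · subst hs
      simp [Matrix.vecMulVec_apply]
      field_simp
      ring
    · simp [Matrix.vecMulVec_apply, hs, Matrix.one_apply, Ne.symm hs]
      field_simp
      ring
  · have : (0 : Fin (m + 2)) ≠ Fin.last _ := by
      intro h; have := congrArg Fin.val h; simp at this
    simp [Matrix.vecMulVec_apply, this, e]
    field_simp
    ring

lemma norm_mulVec {m : ℕ} (θ : Matrix (Fin (m + 2)) (Fin (m + 2)) ℂ) (u : Fin (m + 2) → ℂ)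
    (e : ℂ) (f y : Fin (m + 2) → ℂ) : (θ - e • 1 + Matrix.vecMulVec u f).mulVec y =
      θ.mulVec y - e • y + (f ⬝ᵥ y) • u := by
  rw [Matrix.add_mulVec, Matrix.sub_mulVec, Matrix.smul_mulVec, Matrix.one_mulVec,
    Matrix.vecMulVec_mulVec]
  ext i
  simp

lemma static {m q l : ℕ} (hm : 1 ≤ m) (u : Fin (m + 2) → ℂ) (p : Fin q → Fin (m + 2) → ℂ)
    (B : Fin l → Matrix (Fin (m + 2)) (Fin m) ℂ) (θ : Matrix (Fin (m + 2)) (Fin (m + 2)) ℂ)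
    (hB : ∀ j, (B j).rank = m)
    (hp : ∀ i, mm u (p i) 0 (Fin.last _) ≠ 0) (hQ : ∀ j, ∃ Q, alp u (B j) Q ≠ 0)
    (hu : u (Fin.last _) ≠ 0)
    (hs : Sol u p B θ) (huniq : ∀ θ', Sol u p B θ' → ∃ c : ℂ, θ' = c • θ)
    (hN : IsUnit (Nmat θ u).det) (hg : ∀ j, SplitD m (gj u (B j) θ)) :
    ∃ M : Matrix (Fin (m + 2)) (Fin (m + 2)) ℂ, IsUnit M.det ∧
      (u ∈ cone M ∧ (∀ i, p i ∈ cone M) ∧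
        ∀ j, ({Q : PP (m + 1) | Q.rep ∈ cone M} ∩ projSet (B j)).ncard = m) ∧
      ∀ M' : Matrix (Fin (m + 2)) (Fin (m + 2)) ℂ, IsUnit M'.det →
        (u ∈ cone M' ∧ (∀ i, p i ∈ cone M') ∧
          ∀ j, ({Q : PP (m + 1) | Q.rep ∈ cone M'} ∩ projSet (B j)).ncard = m) →
        cone M' = cone M := by
  have hc := cond_of_sol hp hQ hs
  have hu0 : u ≠ 0 := by rintro rfl; exact hu rfl
  have hp0 : ∀ i, p i ≠ 0 := by
    intro i h
    apply hp i
    simp [mm, h]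
  refine ⟨Nmat θ u, hN, ⟨?_, ?_, ?_⟩, ?_⟩
  · rw [cone_iff]
    exact Or.inr ⟨1, one_ne_zero, by rw [one_smul, Nmat_inf]⟩
  · intro i
    obtain ⟨a, b, e⟩ := hc.pt i
    exact mem_cone_of_theta θ u hN _ (hp0 i) a b e
  · intro j
    exact inter_ncard (hQ j) (hc.la j) hN (hg j)
  · rintro M hM ⟨h1, h2, h3⟩
    obtain ⟨M1, hM1, hcone, c, hc0, huM⟩ := exists_inf M hM u h1
    rw [← hcone] at h1 h2 h3 ⊢
    obtain ⟨θC, hθC⟩ := theta_of_curve M1 hM1 u c hc0 huM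
    obtain ⟨e, f, hl, h00⟩ := theta_normalize θC u hu
    set θ' := θC - e • 1 + Matrix.vecMulVec u f with hθ'
    have hmul : ∀ y, θ'.mulVec y = θC.mulVec y - e • y + (f ⬝ᵥ y) • u :=
      fun y => norm_mulVec θC u e f y
    have hψ : ∀ x : ℂ, ∃ h : ℂ, θ'.mulVec (M1.mulVec (veron _ ![x, 1])) =
        (x - e) • M1.mulVec (veron _ ![x, 1]) + h • u := by
      intro x
      obtain ⟨h, hh⟩ := hθC x
      refine ⟨h + (f ⬝ᵥ (M1.mulVec (veron _ ![x, 1]))), ?_⟩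
      rw [hmul, hh, sub_smul, add_smul]; abel
    have hcond : Cond u p B θ' := by
      refine ⟨?_, ?_, hl, h00⟩
      · intro i
        rcases (cone_iff _ _).1 (h2 i) with ⟨d, hd, x, hx⟩ | ⟨d, hd, hx⟩
        · obtain ⟨h, hh⟩ := hψ x
          refine ⟨x - e, d * h, ?_⟩
          rw [hx, Matrix.mulVec_smul, hh, smul_add, smul_smul, smul_smul, smul_smul, mul_comm d]
        · exfalso
          apply hp i
          have : p i = (d * c⁻¹) • u := by
            rw [huM, hx, smul_smul, mul_assoc, inv_mul_cancel₀ hc0, mul_one]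
          rw [this]
          simp [mm]; ring
      · intro j b hb
        obtain ⟨Q, hQj⟩ := hQ j
        obtain ⟨w, hw, h, hh⟩ := sec (by omega) (by omega) M1 hM1 u c hc0 huM θC hθC (B j) (hB j)
          (alp_notMem u Q (B j) hQj) (h3 j) b hb
        refine ⟨w - e • b, Submodule.sub_mem _ hw (Submodule.smul_mem _ _ hb), h + f ⬝ᵥ b, ?_⟩
        rw [hmul, hh, add_smul]; abel
    obtain ⟨κ, hκ⟩ := huniq θ' (sol_of_cond hcond)
    have hκ0 : κ ≠ 0 := by
      rintro rfl
      obtain ⟨h, hh⟩ := hψ (e + 1)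
      rw [hκ, zero_smul, Matrix.zero_mulVec, huM, add_sub_cancel_left, smul_smul,
        ← Matrix.mulVec_smul, ← Matrix.mulVec_smul, ← Matrix.mulVec_add] at hh
      have := mulVec_inj hM1 ((Matrix.mulVec_zero _).trans hh)
      have h0 := congrFun this 0
      rw [veron_inf] at h0
      simp [veron_aff] at h0
    obtain ⟨M2, hM2, hcone2, hM2v⟩ := exists_affine M1 hM1 κ e hκ0
    obtain ⟨d, hd, hNd⟩ := Nmat_unique M2 θ hM2 u hu0 (by
      intro x
      obtain ⟨h, hh⟩ := hψ (κ * x + e)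
      rw [← hM2v, hκ, Matrix.smul_mulVec, add_sub_cancel_right] at hh
      refine ⟨κ⁻¹ * h, ?_⟩
      have h4 := congrArg (fun z => κ⁻¹ • z) hh
      simp only [smul_add, smul_smul] at h4
      rw [← mul_assoc, inv_mul_cancel₀ hκ0, one_smul, one_mul] at h4
      exact h4)
    rw [← hcone2, hNd]
    ext z
    rw [cone, cone]
    constructor
    · rintro ⟨v, hv, a, ha, rfl⟩
      refine ⟨v, hv, a * d⁻¹, mul_ne_zero ha (inv_ne_zero hd), ?_⟩
      rw [Matrix.smul_mulVec, smul_smul, mul_assoc, inv_mul_cancel₀ hd, mul_one]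
    · rintro ⟨v, hv, a, ha, rfl⟩
      refine ⟨v, hv, a * d, mul_ne_zero ha hd, ?_⟩
      rw [Matrix.smul_mulVec, smul_smul]

end Part5

section Part6
open Polynomial

def Gp {m : ℕ} (ρ : Fin m → ℂ) : ℂ[X] := ∏ k, (X - C (ρ k))

lemma Gp_monic {m : ℕ} (ρ : Fin m → ℂ) : (Gp ρ).Monic := monic_prod_of_monic _ _ fun _ _ => monic_X_sub_C _
lemma Gp_natDegree {m : ℕ} (ρ : Fin m → ℂ) : (Gp ρ).natDegree = m := by
  rw [Gp, natDegree_prod_of_monic _ _ fun _ _ => monic_X_sub_C _]; simp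
lemma Gp_eval {m : ℕ} (ρ : Fin m → ℂ) (x : ℂ) : (Gp ρ).eval x = ∏ k, (x - ρ k) := by
  simp [Gp, eval_prod]
lemma Gp_root {m : ℕ} (ρ : Fin m → ℂ) (k : Fin m) : (Gp ρ).eval (ρ k) = 0 := by
  rw [Gp_eval]; exact Finset.prod_eq_zero (Finset.mem_univ k) (sub_self _)
lemma Gp_ne {m : ℕ} (ρ : Fin m → ℂ) (x : ℂ) (hx : ∀ k, x ≠ ρ k) : (Gp ρ).eval x ≠ 0 := by
  rw [Gp_eval]; exact Finset.prod_ne_zero_iff.2 fun k _ => sub_ne_zero.2 (hx k)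

def Rigid {m q l : ℕ} (μ : Fin q → ℂ) (ρ : Fin l → Fin m → ℂ) : Prop :=
  (∀ j, Function.Injective (ρ j)) ∧
  ∀ Θ : ℂ[X] →ₗ[ℂ] ℂ[X], (∀ f, (Θ f).natDegree ≤ m + 1) →
    (∀ i, ∃ κ : ℂ, ∀ f : ℂ[X], f.natDegree ≤ m → (Θ f).eval (μ i) = κ * f.eval (μ i)) →
    (∀ j k, (Θ (Gp (ρ j))).eval (ρ j k) = 0) →
    ∃ a b : ℂ, ∀ f : ℂ[X], f.natDegree ≤ m → Θ f = (C a + C b * X) * f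

abbrev stdB {m : ℕ} (ρ : Fin m → ℂ) : Matrix (Fin (m + 2)) (Fin m) ℂ :=
  fun r k => veron (m + 1) ![ρ k, 1] r
abbrev stdu (m : ℕ) : Fin (m + 2) → ℂ := Pi.single (Fin.last _) 1

def Theta {n : ℕ} (θ : Matrix (Fin (n + 1)) (Fin (n + 1)) ℂ) : ℂ[X] →ₗ[ℂ] ℂ[X] where
  toFun f := ∑ s : Fin (n + 1), C (dual f (θ.mulVec (Pi.single s 1))) * X ^ (s : ℕ)
  map_add' f g := by
    rw [← Finset.sum_add_distrib]
    refine Finset.sum_congr rfl fun s _ => ?_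
    rw [← add_mul, ← C_add]
    congr 2
    simp [dual, add_mul, Finset.sum_add_distrib]
  map_smul' c f := by
    rw [RingHom.id_apply, Finset.smul_sum]
    refine Finset.sum_congr rfl fun s _ => ?_
    rw [← smul_mul_assoc, smul_C]
    congr 2
    simp [dual, Finset.mul_sum, mul_assoc]

lemma Theta_coeff {n : ℕ} (θ : Matrix (Fin (n + 1)) (Fin (n + 1)) ℂ) (f : ℂ[X])
    (s : Fin (n + 1)) : (Theta θ f).coeff s = dual f (θ.mulVec (Pi.single s 1)) := by
  simp only [Theta, LinearMap.coe_mk, AddHom.coe_mk, finsetSum_coeff, coeff_C_mul, coeff_X_pow]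
  rw [Finset.sum_eq_single s]
  · simp
  · intro b _ hb
    have : (s : ℕ) ≠ b := fun h => hb (Fin.ext h.symm)
    simp [this]
  · simp

lemma Theta_natDegree {n : ℕ} (θ : Matrix (Fin (n + 1)) (Fin (n + 1)) ℂ) (f : ℂ[X]) :
    (Theta θ f).natDegree ≤ n := by
  change (∑ s : Fin (n + 1), C (dual f (θ.mulVec (Pi.single s 1))) * X ^ (s : ℕ)).natDegree ≤ n
  refine natDegree_sum_le_of_forall_le _ _ fun s _ => ?_
  exact (natDegree_C_mul_X_pow_le _ _).trans (Nat.lt_succ_iff.1 s.2)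

lemma Theta_eval {n : ℕ} (θ : Matrix (Fin (n + 1)) (Fin (n + 1)) ℂ) (f : ℂ[X]) (x : ℂ) :
    (Theta θ f).eval x = dual f (θ.mulVec (veron n ![x, 1])) := by
  have : veron n ![x, 1] = ∑ s : Fin (n + 1), x ^ (s : ℕ) • (Pi.single s 1 : Fin (n + 1) → ℂ) := by
    ext r
    simp [veron_aff, Finset.sum_apply, Pi.single_apply]
  rw [this, Matrix.mulVec_sum, dual_sum]
  simp only [Theta, LinearMap.coe_mk, AddHom.coe_mk, eval_finsetSum]
  refine Finset.sum_congr rfl fun s _ => ?_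
  rw [Matrix.mulVec_smul, dual_smul, eval_mul, eval_C, eval_pow, eval_X, mul_comm]

lemma dual_sp {m : ℕ} (ρ : Fin m → ℂ) {w : Fin (m + 2) → ℂ} (hw : w ∈ sp (stdB ρ)) :
    dual (Gp ρ) w = 0 := by
  induction hw using Submodule.span_induction with
  | mem z hz =>
    obtain ⟨k, rfl⟩ := hz
    change dual (Gp ρ) (veron (m + 1) ![ρ k, 1]) = 0
    rw [dual_veron _ (by rw [Gp_natDegree]; omega), Gp_root]
  | zero => simp [dual]
  | add y z _ _ hy hz => rw [dual_add, hy, hz, add_zero]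
  | smul a y _ hy => rw [dual_smul, hy, mul_zero]

lemma rigid_J {m q l : ℕ} {μ : Fin q → ℂ} {ρ : Fin l → Fin m → ℂ} (hR : Rigid μ ρ)
    (θ : Matrix (Fin (m + 2)) (Fin (m + 2)) ℂ)
    (h : Cond (stdu m) (fun i => veron (m + 1) ![μ i, 1]) (fun j => stdB (ρ j)) θ) :
    ∃ c : ℂ, θ = c • Jmat (m + 1) := by
  obtain ⟨a, b, hab⟩ := hR.2 (Theta θ) (Theta_natDegree θ)
    (by
      intro i
      obtain ⟨a, b, e⟩ := h.pt i
      refine ⟨a, fun f hf => ?_⟩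
      rw [Theta_eval, e, dual_add, dual_smul, dual_smul, dual_inf, dual_veron _ (by omega),
        coeff_eq_zero_of_natDegree_lt (by omega)]
      simp)
    (by
      intro j k
      obtain ⟨w, hw, c, e⟩ := h.la j _ (Submodule.subset_span ⟨k, rfl⟩)
      have e' : θ.mulVec (veron (m + 1) ![ρ j k, 1]) = w + c • stdu m := e
      rw [Theta_eval, e', dual_add, dual_smul, dual_inf, dual_sp (ρ j) hw,
        coeff_eq_zero_of_natDegree_lt (by rw [Gp_natDegree]; omega)]
      simp)
  have hent : ∀ (r s : Fin (m + 2)), (r : ℕ) ≤ m →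
      θ r s = (if (s : ℕ) = r then a else 0) + (if (s : ℕ) = r + 1 then b else 0) := by
    intro r s hr
    have h1 := congrArg (fun p => p.coeff s) (hab (X ^ (r : ℕ)) (by simpa using hr))
    simp only [Theta_coeff] at h1
    have h2 : dual (X ^ (r : ℕ)) (θ.mulVec (Pi.single s 1)) = θ r s := by
      rw [dual, Finset.sum_eq_single r]
      · simp
      · intro t _ ht
        have : (t : ℕ) ≠ r := fun h => ht (Fin.ext h)
        simp [coeff_X_pow, this]
      · simp
    rw [h2] at h1
    rw [h1, add_mul, coeff_add, mul_assoc, ← pow_succ', coeff_C_mul, coeff_C_mul, coeff_X_pow,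
      coeff_X_pow]
    simp
  have ha : a = 0 := by
    have := hent 0 0 (by simp)
    rw [h.zz] at this
    simpa using this.symm
  refine ⟨b, ?_⟩
  ext r s
  rcases Nat.lt_or_ge m r with hr | hr
  · have hr' : r = Fin.last _ := by apply Fin.ext; have := r.2; simp; omega
    subst hr'
    have : (s : ℕ) ≠ m + 1 + 1 := by have := s.2; omega
    rw [h.last]
    simp [Jmat, this]
  · rw [hent r s hr, ha]
    simp [Jmat]

lemma J_cond {m q l : ℕ} (μ : Fin q → ℂ) (ρ : Fin l → Fin m → ℂ) :
    Cond (stdu m) (fun i => veron (m + 1) ![μ i, 1]) (fun j => stdB (ρ j)) (Jmat (m + 1)) := by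
  refine ⟨fun i => ⟨_, _, Jmat_veron _⟩, fun j => ?_, fun s => ?_, ?_⟩
  · apply la_of_cols
    intro k
    refine ⟨ρ j k • (fun r => stdB (ρ j) r k), Submodule.smul_mem _ _
      (Submodule.subset_span ⟨k, rfl⟩), _, Jmat_veron _⟩
  · have : (s : ℕ) ≠ m + 1 + 1 := by have := s.2; omega
    simp [Jmat, this]
  · simp [Jmat]

lemma alp_std {m : ℕ} (ρ : Fin m → ℂ) (hρ : Function.Injective ρ) (y : ℂ) (hy : ∀ k, y ≠ ρ k) :
    alp (stdu m) (stdB ρ) (veron (m + 1) ![y, 1]) ≠ 0 := by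
  rw [alp_apply]
  have hinj : Function.Injective (Fin.cons y ρ : Fin (m + 1) → ℂ) := by
    rw [Fin.cons_injective_iff]
    exact ⟨by rintro ⟨k, hk⟩; exact hy k hk.symm, hρ⟩
  have hfam : (Fin.cons (veron (m + 1) ![y, 1]) (fun k r => stdB ρ r k) :
      Fin (m + 1) → Fin (m + 2) → ℂ) =
      fun i => veron (m + 1) ![(Fin.cons y ρ : Fin (m + 1) → ℂ) i, 1] := by
    funext i
    refine Fin.cases ?_ (fun i => ?_) i <;> simp
  have hli : LinearIndependent ℂ (Fin.cons (stdu m)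
      (Fin.cons (veron (m + 1) ![y, 1]) (fun k r => stdB ρ r k)) :
      Fin (m + 2) → Fin (m + 2) → ℂ) := by
    rw [linearIndependent_finCons, hfam]
    refine ⟨veron_indep (by simp) _ hinj, fun hmem => ?_⟩
    have : ∀ w ∈ Submodule.span ℂ (Set.range fun i =>
        veron (m + 1) ![(Fin.cons y ρ : Fin (m + 1) → ℂ) i, 1]),
        dual (Gp (Fin.cons y ρ : Fin (m + 1) → ℂ)) w = 0 := by
      intro w hw
      induction hw using Submodule.span_induction with
      | mem z hz =>
        obtain ⟨k, rfl⟩ := hz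
        beta_reduce
        rw [dual_veron _ (by rw [Gp_natDegree]), Gp_root]
      | zero => simp [dual]
      | add y z _ _ hy hz => rw [dual_add, hy, hz, add_zero]
      | smul a y _ hy => rw [dual_smul, hy, mul_zero]
    have h1 := this _ hmem
    rw [dual_inf] at h1
    have h2 := Gp_monic (Fin.cons y ρ : Fin (m + 1) → ℂ)
    rw [Monic, leadingCoeff, Gp_natDegree] at h2
    rw [h2] at h1
    exact one_ne_zero h1
  have := Matrix.linearIndependent_rows_iff_isUnit (A := Matrix.of (Fin.cons (stdu m)
      (Fin.cons (veron (m + 1) ![y, 1]) (fun k r => stdB ρ r k)) :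
      Fin (m + 2) → Fin (m + 2) → ℂ)) |>.1 hli
  rw [Matrix.isUnit_iff_isUnit_det] at this
  exact this.ne_zero

lemma exists_notin {m : ℕ} (ρ : Fin m → ℂ) : ∃ y : ℂ, ∀ k, y ≠ ρ k := by
  obtain ⟨y, hy⟩ := Set.Infinite.nonempty (Set.finite_range ρ).infinite_compl
  exact ⟨y, fun k h => hy ⟨k, h.symm⟩⟩

lemma Nmat_std (m : ℕ) : ∃ c : ℂ, c ≠ 0 ∧ Nmat (Jmat (m + 1)) (stdu m) = c • 1 := by
  refine Nmat_unique 1 _ (by simp) _ ?_ ?_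
  · intro h; have := congrFun h (Fin.last _); simp at this
  · intro x
    rw [Matrix.one_mulVec]
    exact ⟨_, Jmat_veron x⟩

lemma gj_std {m : ℕ} (ρ : Fin m → ℂ) (hρ : Function.Injective ρ) :
    SplitD m (gj (stdu m) (stdB ρ) (Jmat (m + 1))) := by
  obtain ⟨c, hc, hN⟩ := Nmat_std m
  set g := gj (stdu m) (stdB ρ) (Jmat (m + 1)) with hgdef
  have hev : ∀ x, g.eval x = c * alp (stdu m) (stdB ρ) (veron (m + 1) ![x, 1]) := by
    intro x
    rw [hgdef, gj_eval, ← Nmat_veron, hN, Matrix.smul_mulVec, Matrix.one_mulVec, map_smul,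
      smul_eq_mul]
  have hset : {x | g.eval x = 0} = Set.range ρ := by
    ext x
    constructor
    · intro hx
      by_contra hcon
      have hx' : g.eval x = 0 := hx
      rw [hev] at hx'
      exact mul_ne_zero hc (alp_std ρ hρ x fun k h => hcon ⟨k, h.symm⟩) hx'
    · rintro ⟨k, rfl⟩
      change g.eval _ = 0
      rw [hev]
      have : alp (stdu m) (stdB ρ) (veron (m + 1) ![ρ k, 1]) = 0 := alp_col (stdu m) (stdB ρ) k
      rw [this, mul_zero]
  refine ⟨?_, ?_⟩
  · intro h0
    obtain ⟨y, hy⟩ := exists_notin ρ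
    have hgy : g.eval y ≠ 0 := by rw [hev]; exact mul_ne_zero hc (alp_std ρ hρ y hy)
    have hg0 : g ≠ 0 := by rintro h; rw [h] at hgy; simp at hgy
    have hd : g.natDegree < m := by
      refine lt_of_le_of_ne (gj_natDegree _ _ _) fun h => ?_
      rw [← h] at h0
      exact hg0 (leadingCoeff_eq_zero.1 h0)
    apply hg0
    refine eq_zero_of_natDegree_lt_card_of_eval_eq_zero g hρ (fun k => ?_) (by simpa using hd)
    have : ρ k ∈ {x | g.eval x = 0} := by rw [hset]; exact ⟨k, rfl⟩
    exact this
  · rw [hset, ← Nat.card_coe_set_eq, Nat.card_range_of_injective hρ]; simp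

end Part6

section Part7
open Polynomial

abbrev Sg (m q l : ℕ) := (Fin (q + 1) × Fin (m + 2) × Fin 1) ⊕ (Fin l × Fin (m + 2) × Fin m)

abbrev cu {m q l : ℕ} (x : Sg m q l → ℂ) : Fin (m + 2) → ℂ := fun r => x (.inl (0, r, 0))
abbrev cp {m q l : ℕ} (x : Sg m q l → ℂ) : Fin q → Fin (m + 2) → ℂ :=
  fun i r => x (.inl (i.succ, r, 0))
abbrev cB {m q l : ℕ} (x : Sg m q l → ℂ) : Fin l → Matrix (Fin (m + 2)) (Fin m) ℂ :=
  fun j r k => x (.inr (j, r, k))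

def x0 {m q l : ℕ} (μ : Fin q → ℂ) (ρ : Fin l → Fin m → ℂ) : Sg m q l → ℂ
  | .inl (i, r, _) => (Fin.cons (stdu m) (fun i => veron (m + 1) ![μ i, 1]) :
      Fin (q + 1) → Fin (m + 2) → ℂ) i r
  | .inr (j, r, k) => stdB (ρ j) r k

lemma cu_x0 {m q l : ℕ} (μ : Fin q → ℂ) (ρ : Fin l → Fin m → ℂ) : cu (x0 μ ρ) = stdu m := rfl
lemma cp_x0 {m q l : ℕ} (μ : Fin q → ℂ) (ρ : Fin l → Fin m → ℂ) :
    cp (x0 μ ρ) = fun i => veron (m + 1) ![μ i, 1] := rfl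
lemma cB_x0 {m q l : ℕ} (μ : Fin q → ℂ) (ρ : Fin l → Fin m → ℂ) :
    cB (x0 μ ρ) = fun j => stdB (ρ j) := rfl

section
variable {σ : Type*} {m q l : ℕ}

lemma PolF.alp {u y : (σ → ℂ) → Fin (m + 2) → ℂ} {B : (σ → ℂ) → Matrix (Fin (m + 2)) (Fin m) ℂ}
    (hu : ∀ r, PolF fun x => u x r) (hy : ∀ r, PolF fun x => y x r)
    (hB : ∀ r k, PolF fun x => B x r k) :
    PolF fun x => alp (u x) (B x) (y x) := by
  simp only [alp_apply]
  apply PolF.det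
  intro i j
  refine Fin.cases ?_ (fun i => ?_) i
  · exact hu j
  · refine Fin.cases ?_ (fun i => ?_) i
    · exact hy j
    · exact hB j i

lemma PolF.mm {u p : (σ → ℂ) → Fin (m + 2) → ℂ}
    (hu : ∀ r, PolF fun x => u x r) (hp : ∀ r, PolF fun x => p x r) (a b : Fin (m + 2)) :
    PolF fun x => mm (u x) (p x) a b :=
  ((hu a).mul (hp b)).sub ((hu b).mul (hp a))

lemma PolF.ite {f g : (σ → ℂ) → ℂ} (P : Prop) [Decidable P] (hf : PolF f) (hg : PolF g) :
    PolF fun x => if P then f x else g x := by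
  by_cases h : P <;> simp [h] <;> assumption

lemma PolX.Phi {n : ℕ} {θ : (σ → ℂ) → Matrix (Fin (n + 1)) (Fin (n + 1)) ℂ}
    {u : (σ → ℂ) → Fin (n + 1) → ℂ} (hθ : ∀ r s, PolF fun x => θ x r s)
    (hu : ∀ r, PolF fun x => u x r) (r : Fin (n + 1)) : PolX fun x => Phi (θ x) (u x) r := by
  simp only [_root_.Phi, Matrix.mulVec, dotProduct]
  refine PolX.sum _ fun s => PolX.mul (PolX.adjugate (fun i j => ?_) _ _) (PolX.of_C (hu s))
  simp only [Matrix.charmatrix_apply]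
  exact (PolX.const _).sub (PolX.of_C (hθ _ _))

lemma PolX.gj {θ : (σ → ℂ) → Matrix (Fin (m + 2)) (Fin (m + 2)) ℂ}
    {u : (σ → ℂ) → Fin (m + 2) → ℂ} {B : (σ → ℂ) → Matrix (Fin (m + 2)) (Fin m) ℂ}
    (hθ : ∀ r s, PolF fun x => θ x r s)
    (hu : ∀ r, PolF fun x => u x r) (hB : ∀ r k, PolF fun x => B x r k) :
    PolX fun x => gj (u x) (B x) (θ x) := by
  simp only [_root_.gj]
  exact PolX.sum _ fun s => PolX.mul (PolX.of_C (PolF.alp hu (fun r => PolF.const _) hB))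
    (PolX.Phi hθ hu s)

lemma hcu (r : Fin (m + 2)) : PolF fun x : Sg m q l → ℂ => cu x r := PolF.var _
lemma hcp (i : Fin q) (r : Fin (m + 2)) : PolF fun x : Sg m q l → ℂ => cp x i r := PolF.var _
lemma hcB (j : Fin l) (r : Fin (m + 2)) (k : Fin m) : PolF fun x : Sg m q l → ℂ => cB x j r k :=
  PolF.var _

lemma hrowA (ι : RI m q l) (r : Fin (m + 2)) :
    PolF fun x : Sg m q l → ℂ => rowA (cu x) (cp x) (cB x) ι r := by
  obtain ((⟨i, k⟩ | ⟨j, k⟩) | (s | _)) := ι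
  · simp only [rowA, pf]
    exact ((PolF.ite _ (PolF.mm hcu (hcp i) _ _) (PolF.const _)).sub
      (PolF.ite _ (PolF.mm hcu (hcp i) _ _) (PolF.const _))).sub
      (PolF.ite _ (PolF.mm hcu (hcp i) _ _) (PolF.const _))
  · exact PolF.alp hcu (fun r => PolF.const _) (hcB j)
  · exact PolF.const _
  · exact PolF.const _

lemma hrowB (ι : RI m q l) (r : Fin (m + 2)) :
    PolF fun x : Sg m q l → ℂ => rowB (cp x) (cB x) ι r := by
  obtain ((⟨i, k⟩ | ⟨j, k⟩) | (s | _)) := ι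
  · exact hcp i r
  · exact hcB j r k
  · exact PolF.const _
  · exact PolF.const _

lemma main_poly (hm : 1 ≤ m) (hql : q + l = m + 3) (μ : Fin q → ℂ) (ρ : Fin l → Fin m → ℂ)
    (hR : Rigid μ ρ) : ∃ F : MvPolynomial (Sg m q l) ℂ, F ≠ 0 ∧
      ∀ x : Sg m q l → ℂ, (∀ j, (cB x j).rank = m) → MvPolynomial.eval x F ≠ 0 →
      (cu x ≠ 0 ∧ (∀ i, cp x i ≠ 0)) ∧
      ∃ M : Matrix (Fin (m + 2)) (Fin (m + 2)) ℂ, IsUnit M.det ∧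
      (cu x ∈ cone M ∧ (∀ i, cp x i ∈ cone M) ∧
        ∀ j, ({Q : PP (m + 1) | Q.rep ∈ cone M} ∩ projSet (cB x j)).ncard = m) ∧
      ∀ M' : Matrix (Fin (m + 2)) (Fin (m + 2)) ℂ, IsUnit M'.det →
        (cu x ∈ cone M' ∧ (∀ i, cp x i ∈ cone M') ∧
          ∀ j, ({Q : PP (m + 1) | Q.rep ∈ cone M'} ∩ projSet (cB x j)).ncard = m) →
        cone M' = cone M := by
  let T : (Sg m q l → ℂ) → Matrix (RI m q l) (Fin (m + 2) × Fin (m + 2)) ℂ := fun x ι rs =>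
    rowA (cu x) (cp x) (cB x) ι rs.1 * rowB (cp x) (cB x) ι rs.2
  have hT : ∀ x θ, Sol (cu x) (cp x) (cB x) θ ↔ (T x).mulVec (fun rs => θ rs.1 rs.2) = 0 := by
    intro x θ
    rw [Sol, funext_iff]
    refine forall_congr' fun ι => ?_
    have : (T x).mulVec (fun rs => θ rs.1 rs.2) ι =
        rowA (cu x) (cp x) (cB x) ι ⬝ᵥ θ.mulVec (rowB (cp x) (cB x) ι) := by
      simp only [T, Matrix.mulVec, dotProduct, Fintype.sum_prod_type, Finset.mul_sum]
      refine Finset.sum_congr rfl fun r _ => Finset.sum_congr rfl fun s _ => by ring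
    rw [this]; rfl
  have hpx0 : ∀ i, mm (cu (x0 μ ρ)) (cp (x0 μ ρ) i) 0 (Fin.last _) ≠ 0 := by
    intro i
    rw [cu_x0, cp_x0]
    simp [mm, veron_aff]
  choose y hy using fun j => exists_notin (ρ j)
  have hBx0 : ∀ j, alp (cu (x0 μ ρ)) (cB (x0 μ ρ) j) (veron (m + 1) ![y j, 1]) ≠ 0 := by
    intro j
    exact alp_std (ρ j) (hR.1 j) (y j) (hy j)
  obtain ⟨D, z, hD, hz, hD0, hz0, hTz, hker⟩ := kernel_family (r := RI m q l)
    (m := Fin (m + 2) × Fin (m + 2)) (by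
      simp only [Fintype.card_sum, Fintype.card_prod, Fintype.card_fin, Fintype.card_unit]
      rw [← add_mul, hql]; ring) T
    (fun ι rs => (hrowA ι rs.1).mul (hrowB ι rs.2)) (x0 μ ρ)
    (fun rs => Jmat (m + 1) rs.1 rs.2)
    (by
      intro h
      have := congrFun h (0, 1)
      simp [Jmat] at this)
    ((hT _ _).1 (sol_of_cond (J_cond μ ρ)))
    (by
      intro z hz
      have h1 : Sol (cu (x0 μ ρ)) (cp (x0 μ ρ)) (cB (x0 μ ρ)) (fun r s => z (r, s)) :=
        (hT _ _).2 hz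
      obtain ⟨c, hc⟩ := rigid_J hR _ (cond_of_sol hpx0 (fun j => ⟨_, hBx0 j⟩) h1)
      refine ⟨c, ?_⟩
      ext ⟨r, s⟩
      exact congrFun (congrFun hc r) s)
  let θ : (Sg m q l → ℂ) → Matrix (Fin (m + 2)) (Fin (m + 2)) ℂ := fun x r s => z x (r, s)
  have hθ : ∀ r s, PolF fun x => θ x r s := fun r s => hz (r, s)
  have hθ0 : θ (x0 μ ρ) = Jmat (m + 1) := by
    ext r s
    exact congrFun hz0 (r, s)
  have hP : PolF fun x : Sg m q l → ℂ => D x * (Nmat (θ x) (cu x)).det *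
      (∏ j, discD m (gj (cu x) (cB x j) (θ x))) * (∏ i, mm (cu x) (cp x i) 0 (Fin.last _)) *
      (∏ j, alp (cu x) (cB x j) (veron (m + 1) ![y j, 1])) * cu x (Fin.last _) := by
    refine (((((hD.mul (PolF.det fun r k => ?_)).mul (PolF.prod _ fun j => ?_)).mul
      (PolF.prod _ fun i => ?_)).mul (PolF.prod _ fun j => ?_)).mul ?_)
    · exact (PolX.Phi hθ hcu r).coeff _
    · exact (PolX.gj hθ hcu (hcB j)).discD m
    · exact PolF.mm hcu (hcp i) _ _
    · exact PolF.alp hcu (fun r => PolF.const _) (hcB j)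
    · exact hcu _
  obtain ⟨F, hF⟩ := hP
  refine ⟨F, ?_, ?_⟩
  · rintro rfl
    have h1 := hF (x0 μ ρ)
    rw [map_zero] at h1
    revert h1
    apply Ne.symm
    refine mul_ne_zero (mul_ne_zero (mul_ne_zero (mul_ne_zero (mul_ne_zero hD0 ?_) ?_) ?_) ?_) ?_
    · rw [hθ0, cu_x0]
      obtain ⟨c, hc, h⟩ := Nmat_std m
      rw [h]
      simp [hc]
    · refine Finset.prod_ne_zero_iff.2 fun j _ => ?_
      rw [splitD_iff (gj_natDegree _ _ _), hθ0]
      exact gj_std (ρ j) (hR.1 j)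
    · exact Finset.prod_ne_zero_iff.2 fun i _ => hpx0 i
    · exact Finset.prod_ne_zero_iff.2 fun j _ => hBx0 j
    · rw [cu_x0]; simp
  · intro x hrank hx
    rw [hF] at hx
    simp only [mul_ne_zero_iff, Finset.prod_ne_zero_iff] at hx
    obtain ⟨⟨⟨⟨⟨h1, h2⟩, h3⟩, h4⟩, h5⟩, h6⟩ := hx
    refine ⟨⟨?_, ?_⟩, ?_⟩
    · intro h; exact h6 (congrFun h _)
    · intro i h
      apply h4 i (Finset.mem_univ _)
      rw [h]; simp [mm]
    · refine static hm (cu x) (cp x) (cB x) (θ x) hrank (fun i => h4 i (Finset.mem_univ _))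
        (fun j => ⟨_, h5 j (Finset.mem_univ _)⟩) h6 ((hT _ _).2 (hTz x)) ?_ h2.isUnit ?_
      · intro θ' hθ'
        obtain ⟨c, hc⟩ := hker x h1 _ ((hT _ _).1 hθ')
        refine ⟨c, ?_⟩
        ext r s
        exact congrFun hc (r, s)
      · intro j
        exact (splitD_iff (gj_natDegree _ _ _)).1 (h3 j (Finset.mem_univ _))
end

lemma gen_wrap {m p l : ℕ}
    (Q : (Fin p → Matrix (Fin (m + 2)) (Fin 1) ℂ) →
         (Fin l → Matrix (Fin (m + 2)) (Fin m) ℂ) → Prop)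
    (F : MvPolynomial ((Fin p × Fin (m + 2) × Fin 1) ⊕ (Fin l × Fin (m + 2) × Fin m)) ℂ)
    (hF : F ≠ 0) (h : ∀ P B, (∀ i, (P i).rank = 1) → (∀ j, (B j).rank = m) →
      MvPolynomial.eval
        (Sum.elim (fun q => P q.1 q.2.1 q.2.2) (fun q => B q.1 q.2.1 q.2.2)) F ≠ 0 →
      Q P B) : GenHoldsPtsCodim2 (m + 1) p l Q := ⟨F, hF, h⟩

lemma main_case0 {m q l : ℕ} (P : Fin (q + 1) → Matrix (Fin (m + 2)) (Fin 1) ℂ)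
    (B : Fin l → Matrix (Fin (m + 2)) (Fin m) ℂ)
    (h : ((fun r => P 0 r 0) ≠ 0 ∧ (∀ i : Fin q, (fun r => P i.succ r 0) ≠ 0)) ∧
      ∃ M : Matrix (Fin (m + 2)) (Fin (m + 2)) ℂ, IsUnit M.det ∧
      ((fun r => P 0 r 0) ∈ cone M ∧ (∀ i : Fin q, (fun r => P i.succ r 0) ∈ cone M) ∧
        ∀ j, ({Q : PP (m + 1) | Q.rep ∈ cone M} ∩ projSet (B j)).ncard = m) ∧
      ∀ M' : Matrix (Fin (m + 2)) (Fin (m + 2)) ℂ, IsUnit M'.det →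
        ((fun r => P 0 r 0) ∈ cone M' ∧ (∀ i : Fin q, (fun r => P i.succ r 0) ∈ cone M') ∧
          ∀ j, ({Q : PP (m + 1) | Q.rep ∈ cone M'} ∩ projSet (B j)).ncard = m) →
        cone M' = cone M) :
    ∃! C : Set (PP (m + 1)), IsRNC (m + 1) C ∧ (∀ i, projSet (P i) ⊆ C) ∧
          ∀ j, (C ∩ projSet (B j)).ncard = m := by
  obtain ⟨⟨hu, hp⟩, M, hM, ⟨h1, h2, h3⟩, h4⟩ := h
  refine ⟨{Q | Q.rep ∈ cone M}, ⟨⟨M, hM, rfl⟩, ?_, h3⟩, ?_⟩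
  · intro i
    refine Fin.cases ?_ (fun i => ?_) i
    · exact (point_subset M (P 0) _ rfl hu).2 h1
    · exact (point_subset M (P i.succ) _ rfl (hp i)).2 (h2 i)
  · rintro C ⟨⟨M', hM', hC⟩, hC2, hC3⟩
    have hC' : C = {Q | Q.rep ∈ cone M'} := hC
    subst hC'
    rw [h4 M' hM' ⟨(point_subset M' (P 0) _ rfl hu).1 (hC2 0),
      fun i => (point_subset M' (P i.succ) _ rfl (hp i)).1 (hC2 i.succ), hC3⟩]

lemma main_case {m q l : ℕ} (hm : 1 ≤ m) (hql : q + l = m + 3) (μ : Fin q → ℂ)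
    (ρ : Fin l → Fin m → ℂ) (hR : Rigid μ ρ) :
    GenHoldsPtsCodim2 (m + 1) (q + 1) l fun P B =>
        ∃! C : Set (PP (m + 1)), IsRNC (m + 1) C ∧ (∀ i, projSet (P i) ⊆ C) ∧
          ∀ j, (C ∩ projSet (B j)).ncard = m := by
  obtain ⟨F, hF0, hF⟩ := main_poly hm hql μ ρ hR
  refine gen_wrap _ F hF0 fun P B hP hB hne => ?_
  exact main_case0 P B (hF (Sum.elim (fun q => P q.1 q.2.1 q.2.2) (fun q => B q.1 q.2.1 q.2.2)) hB hne)

end Part7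

section Part8
open Polynomial

lemma root_factor {m : ℕ} {ρ : Fin m → ℂ} (hρ : Function.Injective ρ) {g : ℂ[X]}
    (hg : g.natDegree ≤ m + 1) (h : ∀ k, g.eval (ρ k) = 0) :
    ∃ L : ℂ × ℂ, g = (C L.1 + C L.2 * X) * Gp ρ := by
  have hd : Gp ρ ∣ g := by
    apply Finset.prod_dvd_of_coprime
    · exact fun i _ j _ hij => pairwise_coprime_X_sub_C hρ hij
    · exact fun i _ => dvd_iff_isRoot.2 (h i)
  obtain ⟨f, rfl⟩ := hd
  by_cases hf : f = 0
  · exact ⟨(0, 0), by simp [hf]⟩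
  rw [(Gp_monic ρ).natDegree_mul' hf, Gp_natDegree] at hg
  obtain ⟨a, b, rfl⟩ := exists_eq_X_add_C_of_natDegree_le_one (show f.natDegree ≤ 1 by omega)
  exact ⟨(b, a), by ring⟩

lemma Lp_eq {L L' : ℂ × ℂ} {x y : ℂ} (hxy : x ≠ y) (h1 : L.1 + L.2 * x = L'.1 + L'.2 * x)
    (h2 : L.1 + L.2 * y = L'.1 + L'.2 * y) : L = L' := by
  have h3 : (L.2 - L'.2) * (x - y) = 0 := by linear_combination h1 - h2
  have h4 : L.2 = L'.2 := by
    rcases mul_eq_zero.1 h3 with h | h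
    · exact sub_eq_zero.1 h
    · exact absurd (sub_eq_zero.1 h) hxy
  refine Prod.ext ?_ h4
  rw [h4] at h1
  linear_combination h1

lemma poly_zero {ι : Type*} [Fintype ι] {f : ℂ[X]} (x : ι → ℂ) (hx : Function.Injective x)
    (h : ∀ i, f.eval (x i) = 0) (hd : f.natDegree < Fintype.card ι) : f = 0 :=
  eq_zero_of_natDegree_lt_card_of_eval_eq_zero f hx h hd

lemma natDegree_sub_L {m : ℕ} {g f : ℂ[X]} (hg : g.natDegree ≤ m + 1) (hf : f.natDegree ≤ m)
    (a b : ℂ) : (g - (C a + C b * X) * f).natDegree ≤ m + 1 := by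
  refine (natDegree_sub_le _ _).trans (max_le hg (natDegree_mul_le.trans ?_))
  have : (C a + C b * X : ℂ[X]).natDegree ≤ 1 := by
    rw [add_comm]; exact natDegree_linear_le
  omega

lemma rigid_A (m : ℕ) : Rigid (m := m) (q := m + 3) (l := 0) (fun i => ((i : ℕ) : ℂ)) Fin.elim0 := by
  refine ⟨fun j => j.elim0, fun Θ hd hμ _ => ?_⟩
  choose κ hκ using hμ
  have hinj : Function.Injective (fun i : Fin (m + 3) => ((i : ℕ) : ℂ)) :=
    fun i j h => Fin.ext (Nat.cast_injective (R := ℂ) h)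
  refine ⟨κ 0, κ 1 - κ 0, fun f hf => ?_⟩
  have key : ∀ i : Fin (m + 3), κ i = κ 0 + (κ 1 - κ 0) * ((i : ℕ) : ℂ) := by
    intro i
    by_cases hi0 : i = 0
    · subst hi0; simp
    by_cases hi1 : i = 1
    · subst hi1; simp
    let s : Finset (Fin (m + 3)) := ((Finset.univ.erase 0).erase 1).erase i
    have h10 : (1 : Fin (m + 3)) ≠ 0 := by simp [Fin.ext_iff]
    have hs : s.card = m := by
      rw [Finset.card_erase_of_mem (by simp [hi0, hi1]),
        Finset.card_erase_of_mem (by simp [h10]), Finset.card_erase_of_mem (by simp)]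
      simp
    let f : ℂ[X] := ∏ k ∈ s, (X - C (((k : ℕ) : ℂ)))
    have hf : f.natDegree = m := by
      rw [natDegree_prod_of_monic _ _ fun _ _ => monic_X_sub_C _]
      simp only [natDegree_X_sub_C, Finset.sum_const, hs, smul_eq_mul, mul_one]
    have hz : Θ f - (C (κ 0) + C (κ 1 - κ 0) * X) * f = 0 := by
      refine poly_zero (fun k : {k : Fin (m + 3) // k ≠ i} => ((k.1 : ℕ) : ℂ))
        (fun a b h => Subtype.ext (hinj h)) ?_ ?_
      · rintro ⟨k, hk⟩
        by_cases hk0 : k = 0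
        · subst hk0
          simp only [eval_sub, hκ 0 f hf.le]; simp
        by_cases hk1 : k = 1
        · subst hk1
          simp only [eval_sub, hκ 1 f hf.le]; simp
        have : f.eval ((k : ℕ) : ℂ) = 0 := by
          rw [eval_prod]
          exact Finset.prod_eq_zero (i := k) (by simp [s, hk, hk0, hk1]) (by simp)
        simp only [eval_sub, eval_mul, hκ k f hf.le, this]; simp
      · refine lt_of_le_of_lt (natDegree_sub_L (hd f) hf.le _ _) ?_
        rw [Fintype.card_subtype_compl]; simp
    have h2 := congrArg (eval ((i : ℕ) : ℂ)) hz
    simp only [eval_sub, eval_mul, hκ i f hf.le, eval_add, eval_C, eval_X, eval_zero] at h2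
    rw [← sub_mul] at h2
    rcases mul_eq_zero.1 h2 with h | h
    · exact sub_eq_zero.1 h
    · rw [eval_prod, Finset.prod_eq_zero_iff] at h
      obtain ⟨k, hk, h⟩ := h
      have : i = k := hinj (sub_eq_zero.1 (by simpa using h))
      subst this
      simp [s] at hk
  rw [← sub_eq_zero]
  refine poly_zero _ hinj ?_ ((Nat.lt_succ_of_le (natDegree_sub_L (hd f) hf _ _)).trans (by simp))
  intro i
  simp only [eval_sub, hκ i f hf, key i]; simp

lemma rigid_B (m : ℕ) : Rigid (m := m) (q := m + 2) (l := 1) (fun i => ((i : ℕ) : ℂ))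
    (fun _ k => ((m + 2 + k : ℕ) : ℂ)) := by
  have hρ : Function.Injective (fun k : Fin m => ((m + 2 + k : ℕ) : ℂ)) := by
    intro i j h
    have := Nat.cast_injective (R := ℂ) h
    exact Fin.ext (by omega)
  refine ⟨fun j => hρ, fun Θ hd hμ hG => ?_⟩
  choose κ hκ using hμ
  have hinj : Function.Injective (fun i : Fin (m + 2) => ((i : ℕ) : ℂ)) :=
    fun i j h => Fin.ext (Nat.cast_injective (R := ℂ) h)
  obtain ⟨⟨a, b⟩, hL⟩ := root_factor hρ (hd _) (hG 0)
  refine ⟨a, b, fun f hf => ?_⟩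
  have key : ∀ i : Fin (m + 2), κ i = a + b * ((i : ℕ) : ℂ) := by
    intro i
    have h1 := hκ i _ (Gp_natDegree (fun k : Fin m => ((m + 2 + k : ℕ) : ℂ))).le
    rw [hL] at h1
    simp only [eval_mul, eval_add, eval_C, eval_X] at h1
    refine (mul_right_cancel₀ (Gp_ne _ _ fun k h => ?_) h1).symm
    have := Nat.cast_injective (R := ℂ) h
    omega
  rw [← sub_eq_zero]
  refine poly_zero _ hinj ?_ ((Nat.lt_succ_of_le (natDegree_sub_L (hd f) hf _ _)).trans_le (by simp))
  intro i
  simp only [eval_sub, hκ i f hf, key i]; simp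

/-- Lagrange expansion. -/
abbrev lag (m : ℕ) : Fin (m + 1) → Fin m → ℂ := fun j k => ((j.succAbove k : ℕ) : ℂ)

lemma lag_inj (m : ℕ) (j) : Function.Injective (lag m j) := by
  intro a b h
  exact Fin.succAbove_right_injective (Fin.ext (Nat.cast_injective (R := ℂ) h))

lemma lag_self (m : ℕ) (j) : (Gp (lag m j)).eval ((j : ℕ) : ℂ) ≠ 0 := by
  refine Gp_ne _ _ fun k h => ?_
  exact (Fin.succAbove_ne j k) (Fin.ext (Nat.cast_injective (R := ℂ) h)).symm

lemma lag_ne (m : ℕ) {i j} (h : i ≠ j) : (Gp (lag m j)).eval ((i : ℕ) : ℂ) = 0 := by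
  obtain ⟨k, rfl⟩ := Fin.exists_succAbove_eq h
  exact Gp_root (lag m j) k

lemma lag_expand {m : ℕ} {f : ℂ[X]} (hf : f.natDegree ≤ m) : ∃ c : Fin (m + 1) → ℂ,
    f = ∑ j, c j • Gp (lag m j) := by
  refine ⟨fun j => f.eval ((j : ℕ) : ℂ) / (Gp (lag m j)).eval ((j : ℕ) : ℂ), ?_⟩
  rw [← sub_eq_zero]
  refine poly_zero (fun i : Fin (m + 1) => ((i : ℕ) : ℂ))
    (fun i j h => Fin.ext (Nat.cast_injective (R := ℂ) h)) ?_ ?_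
  · intro i
    rw [eval_sub, eval_finsetSum, Finset.sum_eq_single i]
    · rw [eval_smul, smul_eq_mul, div_mul_cancel₀ _ (lag_self m i), sub_self]
    · intro j _ hj
      rw [eval_smul, lag_ne m hj.symm, smul_zero]
    · simp
  · simp only [Fintype.card_fin]
    refine Nat.lt_succ_of_le ((natDegree_sub_le _ _).trans (max_le hf ?_))
    refine natDegree_sum_le_of_forall_le _ _ fun j _ => ?_
    exact (natDegree_smul_le _ _).trans (Gp_natDegree _).le

lemma of_expand {m : ℕ} {Θ : ℂ[X] →ₗ[ℂ] ℂ[X]} {ι : Type*} [Fintype ι] {G : ι → ℂ[X]}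
    {L : ℂ × ℂ} (h : ∀ j, Θ (G j) = (C L.1 + C L.2 * X) * G j)
    (hG : ∀ f : ℂ[X], f.natDegree ≤ m → ∃ c : ι → ℂ, f = ∑ j, c j • G j) :
    ∃ a b : ℂ, ∀ f : ℂ[X], f.natDegree ≤ m → Θ f = (C a + C b * X) * f := by
  refine ⟨L.1, L.2, fun f hf => ?_⟩
  obtain ⟨c, rfl⟩ := hG f hf
  rw [map_sum, Finset.mul_sum]
  refine Finset.sum_congr rfl fun j _ => ?_
  rw [map_smul, h, mul_smul_comm]

lemma nat_ne_neg (a b : ℕ) : -((a : ℂ) + 1) ≠ (b : ℂ) := by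
  intro h
  have : ((a + 1 + b : ℕ) : ℂ) = 0 := by push_cast; linear_combination -h
  rw [Nat.cast_eq_zero] at this
  omega

lemma rigid_C (m : ℕ) : Rigid (m := m) (q := 2) (l := m + 1) (fun i => -(((i : ℕ) : ℂ) + 1))
    (lag m) := by
  refine ⟨lag_inj m, fun Θ hd hμ hG => ?_⟩
  choose κ hκ using hμ
  choose L hL using fun j => root_factor (lag_inj m j) (hd _) (hG j)
  have h1 : ∀ j (i : Fin 2), (L j).1 + (L j).2 * -(((i : ℕ) : ℂ) + 1) = κ i := by
    intro j i
    have h1 := hκ i _ (Gp_natDegree (lag m j)).le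
    rw [hL] at h1
    simp only [eval_mul, eval_add, eval_C, eval_X] at h1
    exact mul_right_cancel₀ (Gp_ne _ _ fun k h => nat_ne_neg _ _ h) h1
  have h2 : ∀ j, L j = L 0 := by
    intro j
    refine Lp_eq (x := -1) (y := -2) (by norm_num) ?_ ?_
    · have := (h1 j 0).trans (h1 0 0).symm
      simpa using this
    · have := (h1 j 1).trans (h1 0 1).symm
      norm_num at this ⊢
      exact this
  exact of_expand (L := L 0) (fun j => by rw [hL, h2]) (fun f hf => lag_expand hf)

lemma rigid_D (m : ℕ) : Rigid (m := m) (q := 1) (l := m + 2) (fun _ => -(((0 : ℕ) : ℂ) + 1))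
    (Fin.cons (fun k : Fin m => ((m + 1 + k : ℕ) : ℂ)) (lag m) : Fin (m + 2) → Fin m → ℂ) := by
  have hρ : Function.Injective (fun k : Fin m => ((m + 1 + k : ℕ) : ℂ)) := by
    intro i j h
    have := Nat.cast_injective (R := ℂ) h
    exact Fin.ext (by omega)
  refine ⟨fun j => ?_, fun Θ hd hμ hG => ?_⟩
  · refine Fin.cases ?_ (fun j => ?_) j
    · exact hρ
    · exact lag_inj m j
  obtain ⟨κ, hκ⟩ := hμ 0
  choose L hL using fun j => root_factor (g := Θ (Gp (lag m j))) (lag_inj m j) (hd _) (hG j.succ)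
  obtain ⟨L', hL'⟩ := root_factor (g := Θ (Gp (fun k : Fin m => ((m + 1 + k : ℕ) : ℂ)))) hρ
    (hd _) (hG 0)
  have h1 : ∀ j, (L j).1 + (L j).2 * -(((0 : ℕ) : ℂ) + 1) = κ := by
    intro j
    have h1 := hκ _ (Gp_natDegree (lag m j)).le
    rw [hL] at h1
    simp only [eval_mul, eval_add, eval_C, eval_X] at h1
    exact mul_right_cancel₀ (Gp_ne _ _ fun k h => nat_ne_neg _ _ h) h1
  have h1' : L'.1 + L'.2 * -(((0 : ℕ) : ℂ) + 1) = κ := by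
    have h1 := hκ _ (Gp_natDegree (fun k : Fin m => ((m + 1 + k : ℕ) : ℂ))).le
    rw [hL'] at h1
    simp only [eval_mul, eval_add, eval_C, eval_X] at h1
    exact mul_right_cancel₀ (Gp_ne _ _ fun k h => nat_ne_neg _ _ h) h1
  obtain ⟨c, hc⟩ := lag_expand (Gp_natDegree (fun k : Fin m => ((m + 1 + k : ℕ) : ℂ))).le
  have h2 : ∀ j, L j = L' := by
    intro j
    refine Lp_eq (nat_ne_neg 0 j) ((h1 j).trans h1'.symm) ?_
    have e1 := congrArg (eval ((j : ℕ) : ℂ)) hc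
    have e2 := congrArg (fun g => eval ((j : ℕ) : ℂ) (Θ g)) hc
    beta_reduce at e2
    rw [hL', map_sum, eval_finsetSum, Finset.sum_eq_single j] at e2
    · rw [eval_finsetSum, Finset.sum_eq_single j] at e1
      · rw [map_smul, hL, eval_smul, eval_mul, eval_mul] at e2
        rw [eval_smul] at e1
        simp only [eval_add, eval_C, eval_mul, eval_X, smul_eq_mul] at e2 e1
        have hne : (Gp (fun k : Fin m => ((m + 1 + k : ℕ) : ℂ))).eval ((j : ℕ) : ℂ) ≠ 0 := by
          refine Gp_ne _ _ fun k h => ?_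
          have := Nat.cast_injective (R := ℂ) h
          omega
        refine mul_right_cancel₀ hne ?_
        rw [e2, e1]; ring
      · intro i _ hi
        rw [eval_smul, lag_ne m hi.symm, smul_zero]
      · simp
    · intro i _ hi
      rw [map_smul, hL, eval_smul, eval_mul, lag_ne m hi.symm, mul_zero, smul_zero]
    · simp
  exact of_expand (L := L') (fun j => by rw [hL, h2]) (fun f hf => lag_expand hf)

end Part8

section Part9
open Polynomial

lemma split_roots {m : ℕ} {g : ℂ[X]} (hg : g.natDegree ≤ m) (h : SplitD m g) :
    ∃ (c : ℂ) (ρ : Fin m → ℂ), c ≠ 0 ∧ Function.Injective ρ ∧ g = C c * Gp ρ := by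
  obtain ⟨h1, h2⟩ := h
  have hg0 : g ≠ 0 := by rintro rfl; simp at h1
  have hfin : {x | g.eval x = 0}.Finite := by
    refine (g.roots.toFinset.finite_toSet).subset fun x hx => ?_
    simp only [Finset.mem_coe, Multiset.mem_toFinset, mem_roots hg0]
    exact hx
  have : Finite {x | g.eval x = 0} := hfin
  have e := Finite.equivFinOfCardEq h2
  refine ⟨g.coeff m, fun k => (e.symm k).1, h1, fun a b hab => e.symm.injective (Subtype.ext hab), ?_⟩
  set ρ : Fin m → ℂ := fun k => (e.symm k).1
  rw [← sub_eq_zero]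
  by_contra hne
  have hinj : Function.Injective ρ := fun a b hab => e.symm.injective (Subtype.ext hab)
  refine hne (poly_zero ρ hinj ?_ ?_)
  · intro i
    rw [eval_sub, eval_mul, Gp_root, mul_zero, sub_zero]
    exact (e.symm i).2
  · rw [Fintype.card_fin]
    have hd : (g - C (g.coeff m) * Gp ρ).natDegree ≤ m :=
      (natDegree_sub_le _ _).trans (max_le hg (natDegree_C_mul_le _ _ |>.trans (Gp_natDegree _).le))
    refine lt_of_le_of_ne hd fun hh => ?_
    have h3 : (g - C (g.coeff m) * Gp ρ).coeff m = 0 := by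
      have : (Gp ρ).coeff m = 1 := by
        have := (Gp_monic ρ).coeff_natDegree
        rwa [Gp_natDegree] at this
      simp [this]
    have h4 := coeff_natDegree (p := g - C (g.coeff m) * Gp ρ)
    rw [hh, h3] at h4
    exact hne (leadingCoeff_eq_zero.1 h4.symm)

abbrev cons' (m : ℕ) : Fin (m + 1) → Fin m → ℂ := fun j k => ((j + k : ℕ) : ℂ)

lemma cons'_inj (m : ℕ) (j) : Function.Injective (cons' m j) := by
  intro a b h
  have := Nat.cast_injective (R := ℂ) h
  exact Fin.ext (by omega)

lemma cons'_zero {m : ℕ} {j : Fin (m + 1)} {x : ℕ} (h1 : (j : ℕ) ≤ x) (h2 : x < j + m) :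
    (Gp (cons' m j)).eval (x : ℂ) = 0 := by
  have := Gp_root (cons' m j) ⟨x - j, by omega⟩
  rwa [show cons' m j ⟨x - j, by omega⟩ = (x : ℂ) by simp [cons', Nat.add_sub_cancel' h1]] at this

lemma cons'_ne {m : ℕ} {j : Fin (m + 1)} {x : ℕ} (h : x < j ∨ j + m ≤ x) :
    (Gp (cons' m j)).eval (x : ℂ) ≠ 0 := by
  refine Gp_ne _ _ fun k hk => ?_
  have := Nat.cast_injective (R := ℂ) hk
  omega

lemma cons'_indep (m : ℕ) : LinearIndependent ℂ (fun j => Gp (cons' m j)) := by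
  rw [Fintype.linearIndependent_iff]
  intro c hc
  have key : ∀ t : ℕ, ∀ j : Fin (m + 1), (j : ℕ) = t → c j = 0 := by
    intro t
    induction t using Nat.strong_induction_on with
    | _ t ih =>
      rintro j rfl
      have h := congrArg (eval ((j + m : ℕ) : ℂ)) hc
      rw [eval_finsetSum, Finset.sum_eq_single j] at h
      · rw [eval_smul, smul_eq_mul, eval_zero] at h
        exact (mul_eq_zero.1 h).resolve_right (cons'_ne (Or.inr le_rfl))
      · intro i _ hij
        have hij' : (i : ℕ) ≠ j := fun h => hij (Fin.ext h)
        rcases lt_or_gt_of_ne hij' with hlt | hgt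
        · rw [ih _ hlt i rfl, zero_smul, eval_zero]
        · rw [eval_smul, cons'_zero (by omega) (by omega), smul_zero]
      · simp
  exact fun j => key _ j rfl

lemma cons'_expand {m : ℕ} {f : ℂ[X]} (hf : f.natDegree ≤ m) : ∃ c : Fin (m + 1) → ℂ,
    f = ∑ j, c j • Gp (cons' m j) := by
  have hmem : ∀ g : ℂ[X], g.natDegree ≤ m → g ∈ degreeLT ℂ (m + 1) := by
    intro g hg
    rw [mem_degreeLT]
    exact lt_of_le_of_lt degree_le_natDegree (by exact_mod_cast Nat.lt_succ_of_le hg)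
  have hspan : Submodule.span ℂ (Set.range fun j => Gp (cons' m j)) = degreeLT ℂ (m + 1) := by
    have : Module.Finite ℂ (degreeLT ℂ (m + 1)) :=
      Module.Finite.equiv (degreeLTEquiv ℂ (m + 1)).symm
    refine Submodule.eq_of_le_of_finrank_eq ?_ ?_
    · rw [Submodule.span_le]
      rintro _ ⟨j, rfl⟩
      exact hmem _ (Gp_natDegree _).le
    · rw [finrank_span_eq_card (cons'_indep m), (degreeLTEquiv ℂ (m + 1)).finrank_eq]
      simp
  have := hmem f hf
  rw [← hspan, Submodule.mem_span_range_iff_exists_fun] at this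
  obtain ⟨c, hc⟩ := this
  exact ⟨c, hc.symm⟩

lemma exists_ab (m : ℕ) : ∃ a b : Fin (m + 1) → ℂ,
    SplitD m (∑ j, a j • Gp (cons' m j)) ∧ SplitD m (∑ j, b j • Gp (cons' m j)) ∧
    (∀ j, a j ≠ 0) ∧ (∀ j, b j ≠ 0) ∧
    ∀ j : Fin m, a j.castSucc * b j.succ - a j.succ * b j.castSucc ≠ 0 := by
  have hdeg : ∀ a : Fin (m + 1) → ℂ, (∑ j, a j • Gp (cons' m j)).natDegree ≤ m := fun a =>
    natDegree_sum_le_of_forall_le _ _ fun j _ =>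
      (natDegree_smul_le _ _).trans (Gp_natDegree _).le
  let f : (Fin 2 ⊕ (Fin 2 × Fin (m + 1)) ⊕ Fin m) → (Fin 2 × Fin (m + 1) → ℂ) → ℂ := fun i x =>
    match i with
    | .inl s => discD m (∑ j, x (s, j) • Gp (cons' m j))
    | .inr (.inl s) => x s
    | .inr (.inr j) => x (0, j.castSucc) * x (1, j.succ) - x (0, j.succ) * x (1, j.castSucc)
  have hf : ∀ i, PolF (f i) := by
    rintro (s | s | j)
    · refine PolX.discD ?_ m
      simp only [smul_eq_C_mul]
      exact PolX.sum _ fun j => (PolX.of_C (PolF.var _)).mul (PolX.const _)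
    · exact PolF.var s
    · exact ((PolF.var _).mul (PolF.var _)).sub ((PolF.var _).mul (PolF.var _))
  obtain ⟨x, hx⟩ := exists_common hf (by
    rintro (s | s | j)
    · refine ⟨fun t => if t.2 = 0 then 1 else 0, ?_⟩
      change discD m (∑ j, _) ≠ 0
      rw [splitD_iff (hdeg fun j => if j = 0 then 1 else 0)]
      simp only [ite_smul, one_smul, zero_smul, Finset.sum_ite_eq', Finset.mem_univ, if_true]
      constructor
      · have := (Gp_monic (cons' m 0)).coeff_natDegree
        rw [Gp_natDegree] at this
        rw [this]; exact one_ne_zero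
      · have : {x | (Gp (cons' m 0)).eval x = 0} = Set.range (cons' m 0) := by
          ext y
          simp only [Set.mem_ofPred_eq, Set.mem_range]
          constructor
          · intro h
            by_contra hne
            exact Gp_ne _ y (fun k hk => hne ⟨k, hk.symm⟩) h
          · rintro ⟨k, rfl⟩
            exact Gp_root _ _
        rw [this, ← Set.image_univ, Set.ncard_image_of_injective _ (cons'_inj m 0)]
        simp
    · exact ⟨fun _ => 1, one_ne_zero⟩
    · refine ⟨fun t => if t = (0, j.castSucc) ∨ t = (1, j.succ) then 1 else 0, ?_⟩
      have : j.castSucc ≠ j.succ := (Fin.castSucc_lt_succ).ne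
      simp [f, this, this.symm])
  refine ⟨fun j => x (0, j), fun j => x (1, j), ?_, ?_, ?_, ?_, ?_⟩
  · exact (splitD_iff (hdeg _)).1 (hx (.inl 0))
  · exact (splitD_iff (hdeg _)).1 (hx (.inl 1))
  · exact fun j => hx (.inr (.inl (0, j)))
  · exact fun j => hx (.inr (.inl (1, j)))
  · exact fun j => hx (.inr (.inr j))

lemma rigid_E {m : ℕ} (hm : 1 ≤ m) : ∃ ρ : Fin (m + 3) → Fin m → ℂ,
    Rigid (m := m) (q := 0) (l := m + 3) Fin.elim0 ρ := by
  obtain ⟨a, b, ha, hb, ha0, hb0, hab⟩ := exists_ab m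
  have hdeg : ∀ a : Fin (m + 1) → ℂ, (∑ j, a j • Gp (cons' m j)).natDegree ≤ m := fun a =>
    natDegree_sum_le_of_forall_le _ _ fun j _ =>
      (natDegree_smul_le _ _).trans (Gp_natDegree _).le
  obtain ⟨c, ρ, hc, hρ, hcρ⟩ := split_roots (hdeg a) ha
  obtain ⟨d, σ, hd, hσ, hdσ⟩ := split_roots (hdeg b) hb
  refine ⟨(Fin.cons ρ (Fin.cons σ (cons' m) : Fin (m + 2) → Fin m → ℂ) : Fin (m + 3) → Fin m → ℂ),
    fun j => ?_, fun Θ hd _ hG => ?_⟩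
  · refine Fin.cases hρ (fun j => ?_) j
    exact Fin.cases hσ (fun j => cons'_inj m j) j
  choose L hL using fun j => root_factor (g := Θ (Gp (cons' m j))) (cons'_inj m j) (hd _)
    (hG j.succ.succ)
  obtain ⟨A, hA⟩ := root_factor (g := Θ (Gp ρ)) hρ (hd _) (hG 0)
  obtain ⟨B, hB⟩ := root_factor (g := Θ (Gp σ)) hσ (hd _) (hG (Fin.succ 0))
  -- evaluated relations
  have rel : ∀ (a : Fin (m + 1) → ℂ) (c : ℂ) (ρ : Fin m → ℂ) (A : ℂ × ℂ),
      ∑ j, a j • Gp (cons' m j) = C c * Gp ρ → Θ (Gp ρ) = (C A.1 + C A.2 * X) * Gp ρ →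
      ∀ x : ℂ, ∑ j, a j * ((L j).1 + (L j).2 * x - (A.1 + A.2 * x)) * (Gp (cons' m j)).eval x = 0 := by
    intro a c ρ A h1 h2 x
    have e : Θ (∑ j, a j • Gp (cons' m j)) = (C A.1 + C A.2 * X) * ∑ j, a j • Gp (cons' m j) := by
      rw [h1, ← smul_eq_C_mul, map_smul, h2, mul_smul_comm]
    rw [map_sum, Finset.mul_sum, ← sub_eq_zero, ← Finset.sum_sub_distrib] at e
    have e' := congrArg (eval x) e
    rw [eval_finsetSum, eval_zero] at e'
    rw [← e']
    refine Finset.sum_congr rfl fun j _ => ?_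
    rw [map_smul, hL]
    simp only [eval_sub, eval_smul, eval_mul, eval_add, eval_C, eval_X, smul_eq_mul]
    ring
  have relA := rel a c ρ A hcρ hA
  have relB := rel b d σ B hdσ hB
  have ends : ∀ (a : Fin (m + 1) → ℂ) (A : ℂ × ℂ), (∀ j, a j ≠ 0) →
      (∀ x : ℂ, ∑ j, a j * ((L j).1 + (L j).2 * x - (A.1 + A.2 * x)) *
        (Gp (cons' m j)).eval x = 0) →
      (L 0).1 + (L 0).2 * (m : ℂ) = A.1 + A.2 * (m : ℂ) ∧
      (L (Fin.last m)).1 + (L (Fin.last m)).2 * ((m - 1 : ℕ) : ℂ) = A.1 + A.2 * ((m - 1 : ℕ) : ℂ) := by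
    intro a A ha h
    constructor
    · have h1 := h m
      rw [Finset.sum_eq_single 0] at h1
      · have h2 := (mul_eq_zero.1 h1).resolve_right (cons'_ne (Or.inr (by simp)))
        exact sub_eq_zero.1 ((mul_eq_zero.1 h2).resolve_left (ha _))
      · intro i _ hi
        have : (i : ℕ) ≠ 0 := fun h => hi (Fin.ext h)
        rw [cons'_zero (by omega) (by omega), mul_zero]
      · simp
    · have h1 := h ((m - 1 : ℕ) : ℂ)
      rw [Finset.sum_eq_single (Fin.last m)] at h1
      · have h2 := (mul_eq_zero.1 h1).resolve_right (cons'_ne (Or.inl (by simp; omega)))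
        exact sub_eq_zero.1 ((mul_eq_zero.1 h2).resolve_left (ha _))
      · intro i _ hi
        have : (i : ℕ) ≠ m := fun h => hi (Fin.ext h)
        rw [cons'_zero (by omega) (by omega), mul_zero]
      · simp
  obtain ⟨a1, a2⟩ := ends a A ha0 relA
  obtain ⟨b1, b2⟩ := ends b B hb0 relB
  have hAB : A = B := by
    refine Lp_eq (x := (m : ℂ)) (y := ((m - 1 : ℕ) : ℂ)) ?_ (a1.symm.trans b1) (a2.symm.trans b2)
    intro h
    have := Nat.cast_injective (R := ℂ) h
    omega
  subst hAB
  have key : ∀ t : ℕ, t ≤ m → (∀ j : Fin (m + 1), (j : ℕ) < t → L j = A) ∧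
      ∀ j : Fin (m + 1), (j : ℕ) = t →
        (L j).1 + (L j).2 * ((m + t : ℕ) : ℂ) = A.1 + A.2 * ((m + t : ℕ) : ℂ) := by
    intro t
    induction t with
    | zero =>
      refine fun _ => ⟨fun j hj => absurd hj (by omega), fun j hj => ?_⟩
      have : j = 0 := Fin.ext hj
      subst this
      simpa using a1
    | succ t ih =>
      intro ht
      obtain ⟨ih1, ih2⟩ := ih (by omega)
      let j : Fin m := ⟨t, by omega⟩
      have hne : j.castSucc ≠ j.succ := (Fin.castSucc_lt_succ).ne
      have two : ∀ (a : Fin (m + 1) → ℂ), (∀ x : ℂ, ∑ j, a j * ((L j).1 + (L j).2 * x - (A.1 + A.2 * x)) *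
            (Gp (cons' m j)).eval x = 0) → ∀ x : ℂ, x = ((m + (t + 1) : ℕ) : ℂ) →
          a j.castSucc * ((L j.castSucc).1 + (L j.castSucc).2 * x - (A.1 + A.2 * x)) *
            (Gp (cons' m j.castSucc)).eval x +
          a j.succ * ((L j.succ).1 + (L j.succ).2 * x - (A.1 + A.2 * x)) *
            (Gp (cons' m j.succ)).eval x = 0 := by
        rintro a h x rfl
        rw [← h ((m + (t + 1) : ℕ) : ℂ), ← Finset.sum_pair (f := fun i => a i *
          ((L i).1 + (L i).2 * ((m + (t + 1) : ℕ) : ℂ) - (A.1 + A.2 * ((m + (t + 1) : ℕ) : ℂ))) *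
            (Gp (cons' m i)).eval ((m + (t + 1) : ℕ) : ℂ)) hne]
        refine Finset.sum_subset (Finset.subset_univ _) fun i _ hi => ?_
        simp only [Finset.mem_insert, Finset.mem_singleton, not_or] at hi
        have h1 : (i : ℕ) ≠ t := fun h => hi.1 (Fin.ext h)
        have h2 : (i : ℕ) ≠ t + 1 := fun h => hi.2 (Fin.ext h)
        rcases lt_or_gt_of_ne h1 with h3 | h3
        · rw [ih1 i h3, sub_self, mul_zero, zero_mul]
        · rw [cons'_zero (by omega) (by omega), mul_zero]
      have e1 := two a relA _ rfl
      have e2 := two b relB _ rfl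
      have g1 : (Gp (cons' m j.castSucc)).eval ((m + (t + 1) : ℕ) : ℂ) ≠ 0 :=
        cons'_ne (Or.inr (by simp [j]; omega))
      have g2 : (Gp (cons' m j.succ)).eval ((m + (t + 1) : ℕ) : ℂ) ≠ 0 :=
        cons'_ne (Or.inr (by simp [j]; omega))
      have hx := ih2 j.castSucc rfl
      revert e1 e2 g1 g2
      generalize (Gp (cons' m j.castSucc)).eval ((m + (t + 1) : ℕ) : ℂ) = G1
      generalize (Gp (cons' m j.succ)).eval ((m + (t + 1) : ℕ) : ℂ) = G2
      intro e1 e2 g1 g2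
      have hdet := hab j
      have z1 : (L j.castSucc).1 + (L j.castSucc).2 * ((m + (t + 1) : ℕ) : ℂ) -
          (A.1 + A.2 * ((m + (t + 1) : ℕ) : ℂ)) = 0 := by
        refine (mul_eq_zero.1 ?_).resolve_left (mul_ne_zero hdet g1)
        linear_combination b j.succ * e1 - a j.succ * e2
      have z2 : (L j.succ).1 + (L j.succ).2 * ((m + (t + 1) : ℕ) : ℂ) -
          (A.1 + A.2 * ((m + (t + 1) : ℕ) : ℂ)) = 0 := by
        refine (mul_eq_zero.1 ?_).resolve_left (mul_ne_zero hdet g2)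
        linear_combination a j.castSucc * e2 - b j.castSucc * e1
      refine ⟨fun i hi => ?_, fun i hi => ?_⟩
      · rcases Nat.lt_succ_iff_lt_or_eq.1 hi with h | h
        · exact ih1 i h
        · have : i = j.castSucc := Fin.ext h
          subst this
          refine Lp_eq ?_ hx (sub_eq_zero.1 z1)
          intro h
          have := Nat.cast_injective (R := ℂ) h
          omega
      · have : i = j.succ := Fin.ext hi
        subst this
        exact sub_eq_zero.1 z2
  obtain ⟨k1, k2⟩ := key m le_rfl
  have hlast : L (Fin.last m) = A := by
    refine Lp_eq ?_ a2 (k2 _ rfl)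
    intro h
    have := Nat.cast_injective (R := ℂ) h
    omega
  refine of_expand (L := A) (G := fun j => Gp (cons' m j)) (fun j => ?_) (fun f hf => cons'_expand hf)
  have : L j = A := by
    by_cases hj : j = Fin.last m
    · rw [hj, hlast]
    · exact k1 j (lt_of_le_of_ne (Nat.lt_succ_iff.1 j.2) fun h => hj (Fin.ext h))
  rw [hL, this]

end Part9

section Part10
open Polynomial

lemma alp_swap {m : ℕ} (u y : Fin (m + 2) → ℂ) (B : Matrix (Fin (m + 2)) (Fin m) ℂ) :
    alp u B y = - alp y B u := by
  have h : alp (u + y) B (u + y) = 0 := alp_u _ _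
  have hadd : ∀ z, alp (u + y) B z = alp u B z + alp y B z := by
    intro z
    simp only [alp_apply]
    have key : ∀ w : Fin (m + 2) → ℂ, Matrix.of (Fin.cons w (Fin.cons z (fun k r => B r k)) :
        Fin (m + 2) → Fin (m + 2) → ℂ) = Matrix.updateRow (Matrix.of (Fin.cons 0
        (Fin.cons z (fun k r => B r k)) : Fin (m + 2) → Fin (m + 2) → ℂ)) 0 w := by
      intro w
      ext i j
      refine Fin.cases ?_ (fun i => ?_) i
      · simp
      · rw [Matrix.updateRow_ne (Fin.succ_ne_zero i)]; rfl
    rw [key, Matrix.det_updateRow_add, ← key, ← key]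
  rw [hadd, map_add, map_add, alp_u, alp_u, zero_add, add_zero] at h
  exact eq_neg_of_add_eq_zero_left h

lemma nonex_one {m : ℕ} (hm : 1 ≤ m) {M θ : Matrix (Fin (m + 2)) (Fin (m + 2)) ℂ}
    (hM : IsUnit M.det) {u p2 : Fin (m + 2) → ℂ} {c : ℂ} (hc : c ≠ 0)
    (hu : u = c • M.mulVec (veron (m + 1) ![1, 0]))
    (hθ : ∀ x : ℂ, ∃ h : ℂ, θ.mulVec (M.mulVec (veron (m + 1) ![x, 1])) =
      x • M.mulVec (veron (m + 1) ![x, 1]) + h • u)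
    {B : Matrix (Fin (m + 2)) (Fin m) ℂ} (hB : B.rank = m)
    (hC : ({Q : PP (m + 1) | Q.rep ∈ cone M} ∩ projSet B).ncard = m)
    (h2 : alp p2 B u ≠ 0) {x2 h : ℂ} (hp2 : θ.mulVec p2 = x2 • p2 + h • u) :
    ∃ e : ℂ, ∀ (y : Fin (m + 2) → ℂ) (x h' : ℂ), θ.mulVec y = x • y + h' • u →
      (x - x2) * alp u B y = e * alp p2 B y := by
  have hα2 : alp u B p2 ≠ 0 := by rw [alp_swap]; exact neg_ne_zero.2 h2
  have huB := alp_notMem u p2 B hα2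
  have hs := sec (by omega) (by omega) M hM u c hc hu θ hθ B hB huB hC
  have hδ : ∀ y, alp p2 B y = 0 → alp u B (θ.mulVec y) = x2 * alp u B y := by
    intro y hy
    obtain ⟨w, hw, a, rfl⟩ := alp_zero p2 u B h2 y hy
    obtain ⟨w', hw', h', e⟩ := hs w hw
    rw [Matrix.mulVec_add, Matrix.mulVec_smul, e, hp2]
    simp only [map_add, map_smul, alp_u, alp_sp u B hw, alp_sp u B hw', smul_eq_mul]
    ring
  refine ⟨(alp u B (θ.mulVec u) - x2 * alp u B u) / alp p2 B u, fun y x h' hy => ?_⟩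
  have h1 := hδ (y - (alp p2 B y / alp p2 B u) • u) (by
    rw [map_sub, map_smul, smul_eq_mul, div_mul_cancel₀ _ h2, sub_self])
  rw [Matrix.mulVec_sub, Matrix.mulVec_smul, hy] at h1
  simp only [map_sub, map_add, map_smul, alp_u, smul_eq_mul, mul_zero, add_zero, sub_zero] at h1 ⊢
  linear_combination h1

lemma nonex_static {m : ℕ} (hm : 1 ≤ m) (M : Matrix (Fin (m + 2)) (Fin (m + 2)) ℂ)
    (hM : IsUnit M.det) (u p2 p3 p4 : Fin (m + 2) → ℂ) (B1 B2 : Matrix (Fin (m + 2)) (Fin m) ℂ)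
    (hB1 : B1.rank = m) (hB2 : B2.rank = m)
    (hu : u ∈ cone M) (hp2 : p2 ∈ cone M) (hp3 : p3 ∈ cone M) (hp4 : p4 ∈ cone M)
    (hC1 : ({Q : PP (m + 1) | Q.rep ∈ cone M} ∩ projSet B1).ncard = m)
    (hC2 : ({Q : PP (m + 1) | Q.rep ∈ cone M} ∩ projSet B2).ncard = m)
    (n1 : alp p2 B1 u ≠ 0) (n2 : alp p2 B2 u ≠ 0) (n3 : alp u B1 p3 ≠ 0) (n4 : alp u B1 p4 ≠ 0)
    (n5 : alp p2 B1 p3 ≠ 0) :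
    alp u B1 p3 * alp p2 B1 p4 * (alp u B2 p4 * alp p2 B2 p3) -
      alp u B2 p3 * alp p2 B2 p4 * (alp u B1 p4 * alp p2 B1 p3) = 0 := by
  obtain ⟨M1, hM1, hcone, c, hc0, huM⟩ := exists_inf M hM u hu
  rw [← hcone] at hp2 hp3 hp4 hC1 hC2
  obtain ⟨θ, hθ⟩ := theta_of_curve M1 hM1 u c hc0 huM
  have hpt : ∀ y, y ∈ cone M1 → alp u B1 y ≠ 0 → ∃ d x : ℂ, d ≠ 0 ∧
      y = d • M1.mulVec (veron _ ![x, 1]) ∧ ∃ h : ℂ, θ.mulVec y = x • y + h • u := by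
    intro y hy hn
    rcases (cone_iff _ _).1 hy with ⟨d, hd, x, hx⟩ | ⟨d, hd, hx⟩
    · obtain ⟨h, hh⟩ := hθ x
      refine ⟨d, x, hd, hx, d * h, ?_⟩
      rw [hx, Matrix.mulVec_smul, hh, smul_add, smul_smul, smul_smul, smul_smul, mul_comm d x]
    · exfalso
      apply hn
      have : y = (d * c⁻¹) • u := by
        rw [huM, hx, smul_smul, mul_assoc, inv_mul_cancel₀ hc0, mul_one]
      rw [this, map_smul, alp_u, smul_zero]
  obtain ⟨d2, x2, hd2, e2, h2, hh2⟩ := hpt p2 hp2 (by rw [alp_swap]; exact neg_ne_zero.2 n1)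
  obtain ⟨d3, x3, hd3, e3, h3, hh3⟩ := hpt p3 hp3 n3
  obtain ⟨d4, x4, hd4, e4, h4, hh4⟩ := hpt p4 hp4 n4
  have hx : x3 - x2 ≠ 0 := by
    intro h
    rw [sub_eq_zero] at h
    subst h
    apply n5
    have : p3 = (d3 * d2⁻¹) • p2 := by
      rw [e2, e3, smul_smul, mul_assoc, inv_mul_cancel₀ hd2, mul_one]
    rw [this, map_smul, alp_u, smul_zero]
  obtain ⟨f1, hf1⟩ := nonex_one hm hM1 hc0 huM hθ hB1 hC1 n1 hh2
  obtain ⟨f2, hf2⟩ := nonex_one hm hM1 hc0 huM hθ hB2 hC2 n2 hh2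
  have a3 := hf1 p3 x3 h3 hh3
  have a4 := hf1 p4 x4 h4 hh4
  have b3 := hf2 p3 x3 h3 hh3
  have b4 := hf2 p4 x4 h4 hh4
  have s1 : (x3 - x2) * (alp u B1 p3 * alp p2 B1 p4) =
      (x4 - x2) * (alp u B1 p4 * alp p2 B1 p3) := by
    linear_combination alp p2 B1 p4 * a3 - alp p2 B1 p3 * a4
  have s2 : (x3 - x2) * (alp u B2 p3 * alp p2 B2 p4) =
      (x4 - x2) * (alp u B2 p4 * alp p2 B2 p3) := by
    linear_combination alp p2 B2 p4 * b3 - alp p2 B2 p3 * b4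
  refine (mul_eq_zero.1 ?_).resolve_left hx
  linear_combination (alp u B2 p4 * alp p2 B2 p3) * s1 - (alp u B1 p4 * alp p2 B1 p3) * s2

def Bt (m : ℕ) (t : ℂ) : Matrix (Fin (m + 2)) (Fin m) ℂ := fun r k =>
  if (r : ℕ) = k + 2 then 1 else if (k : ℕ) = 0 ∧ (r : ℕ) = 1 then -t else 0

abbrev ee (m : ℕ) (i : ℕ) : Fin (m + 2) → ℂ := fun r => if (r : ℕ) = i then 1 else 0

lemma Bt_det (m : ℕ) (t : ℂ) : alp (ee m 0) (Bt m t) (ee m 1) = 1 := by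
  rw [alp_apply, Matrix.det_of_isLowerTriangular]
  · refine Finset.prod_eq_one fun i _ => ?_
    refine Fin.cases ?_ (fun i => Fin.cases ?_ (fun i => ?_) i) i
    · simp
    · simp
    · simp [Bt]
  · intro i j hij
    have hij' : i < j := hij
    clear hij
    revert hij'
    refine Fin.cases ?_ (fun i => Fin.cases ?_ (fun i => ?_) i) i
    · intro h
      have h' : 0 < (j : ℕ) := h
      have : (j : ℕ) ≠ 0 := by omega
      simp [this]
    · intro h
      have h' : 1 < (j : ℕ) := h
      have : (j : ℕ) ≠ 1 := by omega
      simp [this]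
    · intro h
      have h' : (i : ℕ) + 2 < j := h
      simp only [Matrix.of_apply, Fin.cons_succ, Bt]
      rw [if_neg (by omega), if_neg (by omega)]

lemma Bt_e2 {m : ℕ} (hm : 1 ≤ m) (t : ℂ) (u : Fin (m + 2) → ℂ) :
    alp u (Bt m t) (ee m 2) = t * alp u (Bt m t) (ee m 1) := by
  have h := alp_col u (Bt m t) ⟨0, hm⟩
  have e : (fun r => Bt m t r ⟨0, hm⟩) = ee m 2 - t • ee m 1 := by
    ext r
    simp only [Bt, Pi.sub_apply, Pi.smul_apply, smul_eq_mul]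
    by_cases h2 : (r : ℕ) = 2
    · simp [h2]
    · by_cases h1 : (r : ℕ) = 1 <;> simp [ee, h1, h2]
  rw [e, map_sub, map_smul, sub_eq_zero] at h
  exact h

lemma wit {m : ℕ} (hm : 1 ≤ m) (t : ℂ) (p3 p4 : Fin (m + 2) → ℂ) (h3 : p3 = ee m 0 + ee m 1)
    (h4 : p4 = ee m 0 + (2 : ℂ) • ee m 1 + ee m 2) :
    alp (ee m 1) (Bt m t) (ee m 0) = -1 ∧ alp (ee m 0) (Bt m t) p3 = 1 ∧
    alp (ee m 0) (Bt m t) p4 = 2 + t ∧ alp (ee m 1) (Bt m t) p3 = -1 ∧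
    alp (ee m 1) (Bt m t) p4 = -1 := by
  have h0 : alp (ee m 1) (Bt m t) (ee m 0) = -1 := by rw [alp_swap, Bt_det]
  subst h3 h4
  refine ⟨h0, ?_, ?_, ?_, ?_⟩ <;>
  simp only [map_add, map_smul, alp_u, h0, Bt_det, Bt_e2 hm, smul_eq_mul] <;> ring

lemma nonex {m q l : ℕ} (hm : 1 ≤ m) : GenHoldsPtsCodim2 (m + 1) (q + 4) (l + 2) fun P B =>
        ¬ ∃ C : Set (PP (m + 1)), IsRNC (m + 1) C ∧ (∀ i, projSet (P i) ⊆ C) ∧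
          ∀ j, (C ∩ projSet (B j)).ncard = m := by
  let S := (Fin (q + 4) × Fin (m + 2) × Fin 1) ⊕ (Fin (l + 2) × Fin (m + 2) × Fin m)
  let pt : Fin (q + 4) → (S → ℂ) → Fin (m + 2) → ℂ := fun i x r => x (.inl (i, r, 0))
  let Bb : Fin (l + 2) → (S → ℂ) → Matrix (Fin (m + 2)) (Fin m) ℂ := fun j x r k => x (.inr (j, r, k))
  have hpt : ∀ i r, PolF fun x => pt i x r := fun i r => PolF.var _
  have hBb : ∀ j r k, PolF fun x => Bb j x r k := fun j r k => PolF.var _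
  have hal : ∀ i j k, PolF fun x => alp (pt i x) (Bb j x) (pt k x) := fun i j k =>
    PolF.alp (hpt i) (hpt k) (hBb j)
  have hP : PolF fun x => (alp (pt 0 x) (Bb 0 x) (pt 2 x) * alp (pt 1 x) (Bb 0 x) (pt 3 x) *
      (alp (pt 0 x) (Bb 1 x) (pt 3 x) * alp (pt 1 x) (Bb 1 x) (pt 2 x)) -
      alp (pt 0 x) (Bb 1 x) (pt 2 x) * alp (pt 1 x) (Bb 1 x) (pt 3 x) *
      (alp (pt 0 x) (Bb 0 x) (pt 3 x) * alp (pt 1 x) (Bb 0 x) (pt 2 x))) *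
      alp (pt 1 x) (Bb 0 x) (pt 0 x) * alp (pt 1 x) (Bb 1 x) (pt 0 x) *
      alp (pt 0 x) (Bb 0 x) (pt 2 x) * alp (pt 0 x) (Bb 0 x) (pt 3 x) *
      alp (pt 1 x) (Bb 0 x) (pt 2 x) :=
    (((((((hal _ _ _).mul (hal _ _ _)).mul ((hal _ _ _).mul (hal _ _ _))).sub
      (((hal _ _ _).mul (hal _ _ _)).mul ((hal _ _ _).mul (hal _ _ _)))).mul (hal _ _ _)).mul
      (hal _ _ _)).mul (hal _ _ _)).mul (hal _ _ _) |>.mul (hal _ _ _)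
  obtain ⟨F, hF⟩ := hP
  refine gen_wrap _ F ?_ ?_
  · rintro rfl
    let w : ℕ → Fin (m + 2) → ℂ := fun i => if i = 0 then ee m 0 else if i = 1 then ee m 1 else
      if i = 2 then ee m 0 + ee m 1 else ee m 0 + (2 : ℂ) • ee m 1 + ee m 2
    let x : S → ℂ := Sum.elim (fun s => w s.1 s.2.1) (fun s => Bt m (s.1 : ℕ) s.2.1 s.2.2)
    have h := hF x
    beta_reduce at h
    have e0 : pt 0 x = ee m 0 := rfl
    have e1 : pt 1 x = ee m 1 := rfl
    have e2 : pt 2 x = ee m 0 + ee m 1 := rfl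
    have e3 : pt 3 x = ee m 0 + (2 : ℂ) • ee m 1 + ee m 2 := rfl
    have b0 : Bb 0 x = Bt m ((0 : ℕ) : ℂ) := rfl
    have b1 : Bb 1 x = Bt m ((1 : ℕ) : ℂ) := rfl
    obtain ⟨u1, u2, u3, u4, u5⟩ := wit hm ((0 : ℕ) : ℂ) (pt 2 x) (pt 3 x) e2 e3
    obtain ⟨v1, v2, v3, v4, v5⟩ := wit hm ((1 : ℕ) : ℂ) (pt 2 x) (pt 3 x) e2 e3
    rw [e0, e1, b0, b1, u1, u2, u3, u4, u5, v1, v2, v3, v4, v5] at h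
    norm_num at h
  · rintro P B hP hB hne ⟨C, ⟨M, hM, hC⟩, hC2, hC3⟩
    have hC' : C = {Q | Q.rep ∈ cone M} := hC
    subst hC'
    rw [hF] at hne
    have hP0 : ∀ i, (fun r => P i r 0) ≠ 0 := by
      intro i h
      have : P i = 0 := by
        ext r k
        rw [Subsingleton.elim k 0]
        exact congrFun h r
      have h1 := hP i
      rw [this, Matrix.rank_zero] at h1
      exact zero_ne_one h1
    have hin : ∀ i, (fun r => P i r 0) ∈ cone M := fun i =>
      (point_subset M (P i) _ rfl (hP0 i)).1 (hC2 i)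
    simp only [mul_ne_zero_iff (M₀ := ℂ)] at hne
    obtain ⟨⟨⟨⟨⟨h1, h2⟩, h3⟩, h4⟩, h5⟩, h6⟩ := hne
    exact h1 (nonex_static hm M hM _ _ _ _ _ _ (hB 0) (hB 1) (hin 0) (hin 1) (hin 2) (hin 3)
      (hC3 0) (hC3 1) h2 h3 h4 h5 h6)

end Part10

/-- Rational normal curves through `p` generic points and `(n-1)`-secant to `l` generic
codimension-two subspaces of `ℙⁿ`, with `p + l = n + 3`: for
`(p,l) = (n+3,0), (n+2,1), (3,n), (2,n+1), (1,n+2)` there generically exists a unique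
such curve; for `p ≥ 4` and `l ≥ 2` generically no such curve exists. -/
theorem points_and_codim_two_spaces (n p l : ℕ) (hn : 3 ≤ n) (hp : 1 ≤ p)
    (hpl : p + l = n + 3) :
    (((p = n + 3 ∧ l = 0) ∨ (p = n + 2 ∧ l = 1) ∨ (p = 3 ∧ l = n) ∨
        (p = 2 ∧ l = n + 1) ∨ (p = 1 ∧ l = n + 2)) →
      GenHoldsPtsCodim2 n p l fun P B =>
        ∃! C : Set (PP n), IsRNC n C ∧ (∀ i, projSet (P i) ⊆ C) ∧
          ∀ j, (C ∩ projSet (B j)).ncard = n - 1) ∧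
    ((4 ≤ p ∧ 2 ≤ l) →
      GenHoldsPtsCodim2 n p l fun P B =>
        ¬ ∃ C : Set (PP n), IsRNC n C ∧ (∀ i, projSet (P i) ⊆ C) ∧
          ∀ j, (C ∩ projSet (B j)).ncard = n - 1) := by
  obtain ⟨m, rfl⟩ : ∃ m, n = m + 1 := ⟨n - 1, by omega⟩
  have hm : 1 ≤ m := by omega
  constructor
  · rintro (⟨h1, h2⟩ | ⟨h1, h2⟩ | ⟨h1, h2⟩ | ⟨h1, h2⟩ | ⟨h1, h2⟩)
    · subst h1 h2
      exact main_case (q := m + 3) hm rfl _ _ (rigid_A m)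
    · subst h1 h2
      exact main_case (q := m + 2) hm rfl _ _ (rigid_B m)
    · subst h1 h2
      exact main_case (q := 2) hm (by omega) _ _ (rigid_C m)
    · subst h1 h2
      exact main_case (q := 1) hm (by omega) _ _ (rigid_D m)
    · subst h1 h2
      obtain ⟨ρ, hρ⟩ := rigid_E hm
      exact main_case (q := 0) hm (by omega) _ ρ hρ
  · rintro ⟨h1, h2⟩
    obtain ⟨q, rfl⟩ : ∃ q, p = q + 4 := ⟨p - 4, by omega⟩
    obtain ⟨k, rfl⟩ : ∃ k, l = k + 2 := ⟨l - 2, by omega⟩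
    exact nonex hm

end
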